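/- arXiv:1602.01337 — 11 statements merged into one kernel-verified Lean document; each statement's English description precedes it below -/
import Mathlib

section
/- For every odd integer n ≥ 3, the cycle C_n admits a super edge-magic labeling. Explicitly, the bijection f : V(C_n) → {1,…,n} defined on the vertices v_1,…,v_n of the cycle (with edges v_i v_{i+1} for 1 ≤ i ≤ n−1 and v_n v_1) by f(v_i) = (i+1)/2 if i is odd and f(v_i) = (i+1+n)/2 if i is even makes the set {f(u)+f(v) : uv ∈ E(C_n)} a set of n consecutive integers, and hence extends to a super edge-magic labeling of C_n. -/
/-- An edge-magic labeling of a finite graph presented by an endpoint map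
`ends : E → V × V` (loops and multiple edges allowed): the vertex labels `fv`
and edge labels `fe` together form a bijection onto `{1, …, |V| + |E|}` and
every edge `e` satisfies `fv (ends e).1 + fe e + fv (ends e).2 = k`.
The constant `k` is the valence. -/
def IsEdgeMagic {V E : Type} [Fintype V] [Fintype E] (ends : E → V × V)
    (fv : V → ℕ) (fe : E → ℕ) (k : ℕ) : Prop :=
  Function.Injective (Sum.elim fv fe) ∧
  Set.range (Sum.elim fv fe) = Set.Icc 1 (Fintype.card V + Fintype.card E) ∧
  ∀ e : E, fv (ends e).1 + fe e + fv (ends e).2 = k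

/-- A super edge-magic labeling: edge-magic, and moreover the vertex labels
are exactly `{1, …, |V|}`. -/
def IsSuperEdgeMagic {V E : Type} [Fintype V] [Fintype E] (ends : E → V × V)
    (fv : V → ℕ) (fe : E → ℕ) (k : ℕ) : Prop :=
  IsEdgeMagic ends fv fe k ∧ Set.range fv = Set.Icc 1 (Fintype.card V)

/-- The cycle `C_m`: vertices `Fin m`, edge `i` joins `i` to `i+1 (mod m)`. -/
def cycleEnds (m : ℕ) : Fin m → Fin m × Fin m :=
  fun i => (i, ⟨(i.val + 1) % m, Nat.mod_lt _ i.pos⟩)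

/-- The crown `C_m ⊙ K̄_n`: vertices are `Sum.inl i` (cycle vertices `v_i`) and
`Sum.inr (i, j)` (pendant vertices `v_i^j`); edges are the `m` cycle edges and
the `m * n` pendant edges. -/
def crownEnds (m n : ℕ) :
    (Fin m ⊕ Fin m × Fin n) → (Fin m ⊕ Fin m × Fin n) × (Fin m ⊕ Fin m × Fin n)
  | Sum.inl i => (Sum.inl i, Sum.inl ⟨(i.val + 1) % m, Nat.mod_lt _ i.pos⟩)
  | Sum.inr p => (Sum.inl p.1, Sum.inr p)

/-- The graph `K_{1,n}^l`: the star `K_{1,n}` (center `none`, leaves `some j`)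
with a loop (edge `none`) attached at the center. -/
def starLoopEnds (n : ℕ) : Option (Fin n) → Option (Fin n) × Option (Fin n)
  | none => (none, none)
  | some j => (none, some j)

/-- for odd n ≥ 3 the explicit labeling
f(v_i) = (i+1)/2 for odd i, (i+1+n)/2 for even i (here i = idx.val + 1, 1-based)
induces n consecutive edge sums on C_n, and extends to a super edge-magic
labeling of C_n. -/
theorem cycle_odd_superEdgeMagic (n : ℕ) (hn : 3 ≤ n) (hodd : Odd n)
    (f : Fin n → ℕ)
    (hf : ∀ i : Fin n,
      f i = if (i.val + 1) % 2 = 1 then (i.val + 2) / 2 else (i.val + 2 + n) / 2) :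
    (∃ a : ℕ, Set.range (fun e : Fin n => f (cycleEnds n e).1 + f (cycleEnds n e).2)
        = Set.Ico a (a + n)) ∧
    ∃ fe k, IsSuperEdgeMagic (cycleEnds n) f fe k := by
  obtain ⟨m, hm⟩ := hodd
  have hsum : ∀ e : Fin n, f (cycleEnds n e).1 + f (cycleEnds n e).2
      = if e.val + 1 = n then m + 2 else e.val + m + 3 := by
    intro e
    have he := e.isLt
    have h1 : ((cycleEnds n e).1).val = e.val := rfl
    have h2 : ((cycleEnds n e).2).val = (e.val + 1) % n := rfl
    rw [hf, hf]
    by_cases h : e.val + 1 = n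
    · rw [h, Nat.mod_self] at h2
      split_ifs <;> omega
    · rw [Nat.mod_eq_of_lt (by omega : e.val + 1 < n)] at h2
      split_ifs <;> omega
  have hinj : Function.Injective f := by
    intro i j h
    have hi := i.isLt
    have hj := j.isLt
    rw [hf, hf] at h
    apply Fin.ext
    split_ifs at h <;> omega
  have hrange : Set.range f = Set.Icc 1 n := by
    ext x
    simp only [Set.mem_range, Set.mem_Icc]
    constructor
    · rintro ⟨i, rfl⟩
      have hi := i.isLt
      rw [hf]
      split_ifs <;> omega
    · rintro ⟨h1, h2⟩
      by_cases hx : x ≤ m + 1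
      · refine ⟨⟨2 * x - 2, by omega⟩, ?_⟩
        rw [hf]
        simp only
        split_ifs <;> omega
      · refine ⟨⟨2 * x - 2 - n, by omega⟩, ?_⟩
        rw [hf]
        simp only
        split_ifs <;> omega
  refine ⟨⟨m + 2, ?_⟩, ?_⟩
  · ext x
    simp only [hsum, Set.mem_range, Set.mem_Ico]
    constructor
    · rintro ⟨e, rfl⟩
      have he := e.isLt
      split_ifs <;> omega
    · rintro ⟨h1, h2⟩
      by_cases hx : x = m + 2
      · refine ⟨⟨n - 1, by omega⟩, ?_⟩
        simp only
        split_ifs <;> omega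
      · refine ⟨⟨x - m - 3, by omega⟩, ?_⟩
        simp only
        split_ifs <;> omega
  · have hfr : ∀ i, 1 ≤ f i ∧ f i ≤ n := by
      intro i
      have : f i ∈ Set.Icc 1 n := hrange ▸ Set.mem_range_self i
      exact this
    refine ⟨fun e => if e.val + 1 = n then 2 * n else 2 * n - 1 - e.val, m + 2 + 2 * n,
      ⟨?_, ?_, ?_⟩, ?_⟩
    · refine Function.Injective.sumElim hinj ?_ ?_
      · intro i j h
        have hi := i.isLt
        have hj := j.isLt
        simp only at h
        apply Fin.ext
        split_ifs at h <;> omega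
      · intro i e h
        have hi := hfr i
        have he := e.isLt
        split_ifs at h <;> omega
    · rw [Set.Sum.elim_range, hrange]
      ext x
      simp only [Set.mem_union, Set.mem_range, Set.mem_Icc, Fintype.card_fin]
      constructor
      · rintro (h | ⟨e, rfl⟩)
        · omega
        · have he := e.isLt
          split_ifs <;> omega
      · rintro ⟨h1, h2⟩
        by_cases hx : x ≤ n
        · exact Or.inl ⟨h1, hx⟩
        · right
          by_cases hx2 : x = 2 * n
          · refine ⟨⟨n - 1, by omega⟩, ?_⟩
            simp only
            split_ifs <;> omega
          · refine ⟨⟨2 * n - 1 - x, by omega⟩, ?_⟩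
            simp only
            split_ifs <;> omega
    · intro e
      have h := hsum e
      have he := e.isLt
      simp only
      split_ifs at h ⊢ <;> omega
    · rw [hrange, Fintype.card_fin]
end

section
/- Let G be a (p,q)-graph. Then G is super edge-magic if and only if there is a bijection g : V(G) → {1,…,p} such that the set S = {g(u)+g(v) : uv ∈ E(G)} consists of q consecutive integers. Moreover, in this case g can be extended to a super edge-magic labeling f of G with valence p + q + min S. -/
theorem inj_of_range_eq {α : Type} [Fintype α] (f : α → ℕ) (s : Finset ℕ)
    (h : Set.range f = (s : Set ℕ)) (hc : s.card = Fintype.card α) :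
    Function.Injective f := by
  classical
  have h1 : Finset.univ.image f = s := by
    apply Finset.coe_injective
    simpa using h
  have h2 : (Finset.univ.image f).card = (Finset.univ : Finset α).card := by
    rw [h1, hc, Finset.card_univ]
  intro x y hxy
  exact Finset.card_image_iff.mp h2 (by simp) (by simp) hxy

/-- a (p,q)-graph is super edge-magic iff there is a bijection
g : V → {1,…,p} whose induced edge sums form q consecutive integers
({a, …, a+q-1}, so min S = a); moreover any such g extends to a super
edge-magic labeling with valence p + q + min S. -/
theorem superEdgeMagic_iff_consecutive {V E : Type} [Fintype V] [Fintype E]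
    (ends : E → V × V) :
    ((∃ fv fe k, IsSuperEdgeMagic ends fv fe k) ↔
      ∃ g : V → ℕ, Set.range g = Set.Icc 1 (Fintype.card V) ∧
        ∃ a : ℕ, Set.range (fun e : E => g (ends e).1 + g (ends e).2)
          = Set.Ico a (a + Fintype.card E)) ∧
    ∀ (g : V → ℕ) (a : ℕ),
      Set.range g = Set.Icc 1 (Fintype.card V) →
      Set.range (fun e : E => g (ends e).1 + g (ends e).2)
        = Set.Ico a (a + Fintype.card E) →
      ∃ fe, IsSuperEdgeMagic ends g fe (Fintype.card V + Fintype.card E + a) := by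
  have main : ∀ (g : V → ℕ) (a : ℕ),
      Set.range g = Set.Icc 1 (Fintype.card V) →
      Set.range (fun e : E => g (ends e).1 + g (ends e).2)
        = Set.Ico a (a + Fintype.card E) →
      ∃ fe, IsSuperEdgeMagic ends g fe (Fintype.card V + Fintype.card E + a) := by
    intro g a hg hS
    have gi : Function.Injective g :=
      inj_of_range_eq g (Finset.Icc 1 (Fintype.card V)) (by simpa using hg) (by simp)
    have si := inj_of_range_eq (fun e : E => g (ends e).1 + g (ends e).2)
      (Finset.Ico a (a + Fintype.card E)) (by simpa using hS) (by simp)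
    have hgm : ∀ v, 1 ≤ g v ∧ g v ≤ Fintype.card V := fun v => by
      have : g v ∈ Set.range g := ⟨v, rfl⟩
      rw [hg] at this
      exact this
    have hsm : ∀ e, a ≤ g (ends e).1 + g (ends e).2 ∧
        g (ends e).1 + g (ends e).2 < a + Fintype.card E := fun e => by
      have : g (ends e).1 + g (ends e).2 ∈
        Set.range (fun e : E => g (ends e).1 + g (ends e).2) := ⟨e, rfl⟩
      rw [hS] at this
      exact this
    refine ⟨fun e => Fintype.card V + Fintype.card E + a - (g (ends e).1 + g (ends e).2),
      ⟨?_, ?_, ?_⟩, hg⟩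
    · rintro (x | x) (y | y) h <;> simp only [Sum.elim_inl, Sum.elim_inr] at h
      · rw [gi h]
      · have := hgm x
        have := hsm y
        omega
      · have := hgm y
        have := hsm x
        omega
      · have h1 := hsm x
        have h2 := hsm y
        have h3 : x = y := si (by dsimp only; omega)
        rw [h3]
    · ext n
      constructor
      · rintro ⟨x | x, rfl⟩
        · have := hgm x
          simp only [Sum.elim_inl, Set.mem_Icc]
          omega
        · have := hsm x
          simp only [Sum.elim_inr, Set.mem_Icc]
          omega
      · rintro ⟨h1, h2⟩
        by_cases hn : n ≤ Fintype.card V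
        · have : n ∈ Set.range g := by
            rw [hg]
            exact ⟨h1, hn⟩
          obtain ⟨v, rfl⟩ := this
          exact ⟨Sum.inl v, rfl⟩
        · have : Fintype.card V + Fintype.card E + a - n ∈
              Set.range (fun e : E => g (ends e).1 + g (ends e).2) := by
            rw [hS]
            constructor <;> omega
          obtain ⟨e, he⟩ := this
          refine ⟨Sum.inr e, ?_⟩
          simp only [Sum.elim_inr] at he ⊢
          omega
    · intro e
      have := hsm e
      dsimp only
      omega
  refine ⟨⟨?_, ?_⟩, main⟩
  · rintro ⟨fv, fe, k, ⟨hi, hr, hk⟩, hv⟩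
    refine ⟨fv, hv, k - (Fintype.card V + Fintype.card E), ?_⟩
    have hfe : ∀ e, Fintype.card V < fe e ∧ fe e ≤ Fintype.card V + Fintype.card E := by
      intro e
      have h1 : fe e ∈ Set.Icc 1 (Fintype.card V + Fintype.card E) := by
        rw [← hr]
        exact ⟨Sum.inr e, rfl⟩
      refine ⟨?_, h1.2⟩
      by_contra hlt
      have h2 : fe e ∈ Set.range fv := by
        rw [hv]
        exact ⟨h1.1, by omega⟩
      obtain ⟨v, hv'⟩ := h2
      have h3 : (Sum.inl v : V ⊕ E) = Sum.inr e := hi hv'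
      cases h3
    have hsurj : ∀ n, Fintype.card V < n → n ≤ Fintype.card V + Fintype.card E →
        ∃ e, fe e = n := by
      intro n h1 h2
      have h3 : n ∈ Set.range (Sum.elim fv fe) := by
        rw [hr]
        exact ⟨by omega, h2⟩
      obtain ⟨v | e, h⟩ := h3
      · have h4 : fv v ∈ Set.Icc 1 (Fintype.card V) := by
          rw [← hv]
          exact ⟨v, rfl⟩
        have h5 := h4.2
        simp only [Sum.elim_inl] at h
        omega
      · exact ⟨e, h⟩
    have hkb : 0 < Fintype.card E → Fintype.card V + Fintype.card E ≤ k := by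
      intro h
      obtain ⟨e, he⟩ := hsurj (Fintype.card V + Fintype.card E) (by omega) le_rfl
      have := hk e
      omega
    ext n
    constructor
    · rintro ⟨e, rfl⟩
      have h1 := hk e
      have h2 := hfe e
      have h3 := hkb (by omega)
      simp only [Set.mem_Ico]
      omega
    · rintro ⟨h1, h2⟩
      have h3 := hkb (by omega)
      obtain ⟨e, he⟩ := hsurj (k - n) (by omega) (by omega)
      refine ⟨e, ?_⟩
      have := hk e
      dsimp only
      omega
  · rintro ⟨g, hg, a, hS⟩
    obtain ⟨fe, h⟩ := main g a hg hS
    exact ⟨g, fe, _, h⟩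
end

section
/- For every positive integer n, the graph K_{1,n}^l (the star K_{1,n} with a loop attached at its central vertex) is perfect super edge-magic: for every integer k with 2n+4 ≤ k ≤ 3n+4 there exists a super edge-magic labeling of K_{1,n}^l with valence k, and conversely every super edge-magic labeling of K_{1,n}^l has valence in {2n+4, 2n+5, …, 3n+4}. In particular K_{1,n}^l has exactly n+1 distinct super edge-magic valences. -/
/-- K_{1,n}^l is perfect super edge-magic; the super edge-magic
valences are exactly the integers in [2n+4, 3n+4] (hence exactly n+1 of them). -/
theorem starLoop_perfectSuperEdgeMagic (n : ℕ) (hn : 1 ≤ n) :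
    (∀ k : ℕ, 2 * n + 4 ≤ k → k ≤ 3 * n + 4 →
      ∃ fv fe, IsSuperEdgeMagic (starLoopEnds n) fv fe k) ∧
    (∀ fv fe k, IsSuperEdgeMagic (starLoopEnds n) fv fe k →
      2 * n + 4 ≤ k ∧ k ≤ 3 * n + 4) := by
  constructor
  · intro k hk1 hk2
    obtain ⟨c, rfl⟩ : ∃ c, k = 2 * n + 3 + c := ⟨k - (2 * n + 3), by omega⟩
    obtain ⟨g, hg0, hg1⟩ : ∃ g : Option (Fin n) → ℕ, g none = c ∧
        ∀ j : Fin n, g (some j) = if j.val + 1 < c then j.val + 1 else j.val + 2 :=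
      ⟨fun x => match x with
        | none => c
        | some j => if j.val + 1 < c then j.val + 1 else j.val + 2, rfl, fun _ => rfl⟩
    have hb : ∀ x, 1 ≤ g x ∧ g x ≤ n + 1 := by
      rintro (_ | j)
      · omega
      · have := j.isLt
        rw [hg1]; split_ifs <;> omega
    have hinj : ∀ x y, g x = g y → x = y := by
      rintro (_ | i) (_ | j) h
      · rfl
      · rw [hg0, hg1] at h; split_ifs at h <;> omega
      · rw [hg0, hg1] at h; split_ifs at h <;> omega
      · rw [hg1, hg1] at h
        congr 1
        apply Fin.ext
        split_ifs at h <;> omega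
    have hsurj : ∀ m, 1 ≤ m → m ≤ n + 1 → ∃ x, g x = m := by
      intro m h1 h2
      rcases lt_trichotomy m c with h | h | h
      · refine ⟨some ⟨m - 1, by omega⟩, ?_⟩
        rw [hg1, if_pos (by simp only; omega)]; simp only; omega
      · exact ⟨none, by omega⟩
      · refine ⟨some ⟨m - 2, by omega⟩, ?_⟩
        rw [hg1, if_neg (by simp only; omega)]; simp only; omega
    refine ⟨g, fun x => 2 * n + 3 - g x, ⟨?_, ?_, ?_⟩, ?_⟩
    · rintro (x | x) (y | y) h <;> simp only [Sum.elim_inl, Sum.elim_inr] at h <;>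
        have hx := hb x <;> have hy := hb y
      · rw [hinj x y h]
      · omega
      · omega
      · rw [hinj x y (by omega)]
    · ext m
      simp only [Set.mem_range, Set.mem_Icc, Fintype.card_option, Fintype.card_fin]
      constructor
      · rintro ⟨x | x, rfl⟩ <;> have hx := hb x <;>
          simp only [Sum.elim_inl, Sum.elim_inr] <;> omega
      · rintro ⟨h1, h2⟩
        by_cases h : m ≤ n + 1
        · obtain ⟨x, hx⟩ := hsurj m h1 h
          exact ⟨Sum.inl x, hx⟩
        · obtain ⟨x, hx⟩ := hsurj (2 * n + 3 - m) (by omega) (by omega)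
          refine ⟨Sum.inr x, ?_⟩
          simp only [Sum.elim_inr]; omega
    · rintro (_ | j)
      · have := hb none
        simp only [starLoopEnds]; omega
      · have := hb (some j)
        simp only [starLoopEnds]; omega
    · ext m
      simp only [Set.mem_range, Set.mem_Icc, Fintype.card_option, Fintype.card_fin]
      constructor
      · rintro ⟨x, rfl⟩; exact hb x
      · rintro ⟨h1, h2⟩; exact hsurj m h1 h2
  · rintro fv fe k ⟨⟨hinj, hr, hk⟩, hv⟩
    simp only [Fintype.card_option, Fintype.card_fin] at hr hv
    have hk' : ∀ x, fv none + fe x + fv x = k := by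
      rintro (_ | j)
      · exact hk none
      · exact hk (some j)
    have hup : ∀ x, 1 ≤ fe x ∧ fe x ≤ (n + 1) + (n + 1) := fun x => by
      have : fe x ∈ Set.Icc 1 ((n + 1) + (n + 1)) := hr ▸ ⟨Sum.inr x, rfl⟩
      exact this
    have hlow : ∀ x, n + 2 ≤ fe x := fun x => by
      by_contra hlt
      have : fe x ∈ Set.range fv := hv ▸ ⟨(hup x).1, by omega⟩
      obtain ⟨y, hy⟩ := this
      have := @hinj (Sum.inl y) (Sum.inr x) hy
      cases this
    have hc : fv none ∈ Set.Icc 1 (n + 1) := hv ▸ ⟨none, rfl⟩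
    obtain ⟨hc1, hc2⟩ := hc
    obtain ⟨x, hx⟩ : 1 ∈ Set.range fv := hv ▸ ⟨le_refl _, by omega⟩
    obtain ⟨y, hy⟩ : n + 1 ∈ Set.range fv := hv ▸ ⟨by omega, le_refl _⟩
    have h1 := hk' x
    have h2 := hk' y
    have h3 := hup x
    have h4 := hlow y
    omega
end

section
/- For every positive integer n, the graph K_{1,n}^l (the star K_{1,n} with a loop attached at its central vertex) is perfect edge-magic: for every integer k with 2n+4 ≤ k ≤ 4n+5 there exists an edge-magic labeling of K_{1,n}^l with valence k. In particular K_{1,n}^l has at least 2n+2 distinct edge-magic valences. -/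
/-- K_{1,n}^l is perfect edge-magic: every integer k with
2n+4 ≤ k ≤ 4n+5 is the valence of some edge-magic labeling of K_{1,n}^l. -/
theorem starLoop_perfectEdgeMagic (n : ℕ) (hn : 1 ≤ n) :
    ∀ k : ℕ, 2 * n + 4 ≤ k → k ≤ 4 * n + 5 →
      ∃ fv fe, IsEdgeMagic (starLoopEnds n) fv fe k := by
  intro k hk1 hk2
  obtain ⟨c, rfl⟩ : ∃ c, k = c + (2 * n + 3) := ⟨k - (2 * n + 3), by omega⟩
  have hc1 : 1 ≤ c := by omega
  have hc2 : c ≤ 2 * n + 2 := by omega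
  -- `m` is the smaller element of the pair `{c, 2n+3-c}`.
  obtain ⟨m, hm1, hm2, hm⟩ : ∃ m, 1 ≤ m ∧ m ≤ n + 1 ∧ (c = m ∨ c + m = 2 * n + 3) := by
    by_cases h : c ≤ n + 1
    · exact ⟨c, hc1, h, Or.inl rfl⟩
    · exact ⟨2 * n + 3 - c, by omega, by omega, by omega⟩
  -- `a` enumerates `{1, …, n+1} \ {m}`.
  obtain ⟨a, ha⟩ : ∃ a : Fin n → ℕ, ∀ j, (j.val + 1 < m ∧ a j = j.val + 1) ∨
      (m ≤ j.val + 1 ∧ a j = j.val + 2) := by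
    refine ⟨fun j => if j.val + 1 < m then j.val + 1 else j.val + 2, fun j => ?_⟩
    dsimp only
    split_ifs <;> omega
  have hsurj : ∀ y, 1 ≤ y → y ≤ n + 1 → y ≠ m → ∃ j, a j = y := by
    intro y h1 h2 h3
    by_cases h : y < m
    · refine ⟨⟨y - 1, by omega⟩, ?_⟩
      have := ha ⟨y - 1, by omega⟩
      dsimp only at this
      omega
    · refine ⟨⟨y - 2, by omega⟩, ?_⟩
      have := ha ⟨y - 2, by omega⟩
      dsimp only at this
      omega
  refine ⟨fun v => v.elim c a, fun e => e.elim (2 * n + 3 - c) (fun j => 2 * n + 3 - a j),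
    ?_, ?_, ?_⟩
  · rintro ((_ | i) | (_ | i)) ((_ | j) | (_ | j)) h <;>
      simp only [Sum.elim_inl, Sum.elim_inr, Option.elim_none, Option.elim_some] at h <;>
      first
      | rfl
      | (exfalso; omega)
      | (exfalso; have := ha i; have := i.isLt; omega)
      | (exfalso; have := ha j; have := j.isLt; omega)
      | (have hi := ha i; have hj := ha j; have := i.isLt; have := j.isLt
         first
         | (exfalso; omega)
         | (have : i = j := Fin.ext (by omega)
            rw [this]))
  · ext x
    simp only [Set.mem_range, Set.mem_Icc, Fintype.card_option, Fintype.card_fin]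
    constructor
    · rintro ⟨(_ | i) | (_ | i), rfl⟩ <;>
        simp only [Sum.elim_inl, Sum.elim_inr, Option.elim_none, Option.elim_some]
      · omega
      · have := ha i; have := i.isLt; omega
      · omega
      · have := ha i; have := i.isLt; omega
    · rintro ⟨h1, h2⟩
      by_cases hx : x = c
      · exact ⟨Sum.inl none, by simp [hx]⟩
      by_cases hx' : x = 2 * n + 3 - c
      · exact ⟨Sum.inr none, by simp [hx']⟩
      by_cases h : x ≤ n + 1
      · obtain ⟨j, hj⟩ := hsurj x h1 h (by omega)
        exact ⟨Sum.inl (some j), by simpa using hj⟩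
      · obtain ⟨j, hj⟩ := hsurj (2 * n + 3 - x) (by omega) (by omega) (by omega)
        refine ⟨Sum.inr (some j), ?_⟩
        simp only [Sum.elim_inr, Option.elim_some]
        omega
  · rintro (_ | j)
    · simp only [starLoopEnds, Option.elim_none]
      omega
    · simp only [starLoopEnds, Option.elim_none, Option.elim_some]
      have := ha j; have := j.isLt; omega
end

section
/- Let p and q be distinct odd primes and let k be a positive integer. Then there exist exactly 2p^{k−1} integers y with 1 < y < p^k q such that gcd(y, p^k q) ≠ 1 and gcd(y−1, p^k q) ≠ 1. Moreover, these integers are precisely the numbers of the form x + λpq and x′ + λpq with λ an integer in [0, p^{k−1}−1], where x and x′ = pq − x + 1 are the two integers in (1, pq) satisfying gcd(x, pq) ≠ 1 and gcd(x−1, pq) ≠ 1. -/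
lemma cbr_conv {c a b : ℤ} (h : c ∣ a) (e : b = a) : c ∣ b := e ▸ h

lemma cbr_gcd (p q k y : ℕ) (hp : p.Prime) (hq : q.Prime) (hk : 1 ≤ k) :
    Nat.gcd y (p ^ k * q) ≠ 1 ↔ (p ∣ y ∨ q ∣ y) := by
  have h : Nat.gcd y (p ^ k * q) = 1 ↔ (¬ p ∣ y ∧ ¬ q ∣ y) := by
    change Nat.Coprime y (p ^ k * q) ↔ _
    rw [Nat.coprime_mul_iff_right, Nat.coprime_pow_right_iff (by omega),
      Nat.coprime_comm, hp.coprime_iff_not_dvd, Nat.coprime_comm, hq.coprime_iff_not_dvd]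
  rw [ne_eq, h]
  tauto

/-- The bad condition over the integers. -/
def CbrBad (p q : ℕ) (a : ℤ) : Prop :=
  ((p : ℤ) ∣ a ∧ (q : ℤ) ∣ a - 1) ∨ ((q : ℤ) ∣ a ∧ (p : ℤ) ∣ a - 1)

lemma cbr_not (p : ℕ) (hp : p.Prime) (a : ℤ) (h : (p : ℤ) ∣ a) (h' : (p : ℤ) ∣ a - 1) :
    False := by
  have h1 : (p : ℤ) ∣ 1 := by simpa using dvd_sub h h'
  have h2 : p ∣ 1 := by exact_mod_cast h1
  exact hp.one_lt.ne' (Nat.dvd_one.mp h2)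

lemma cbr_bad_iff (p q k y : ℕ) (hp : p.Prime) (hq : q.Prime) (hk : 1 ≤ k) (hy : 1 ≤ y) :
    (Nat.gcd y (p ^ k * q) ≠ 1 ∧ Nat.gcd (y - 1) (p ^ k * q) ≠ 1) ↔ CbrBad p q y := by
  rw [cbr_gcd p q k y hp hq hk, cbr_gcd p q k (y - 1) hp hq hk]
  have e : ((y - 1 : ℕ) : ℤ) = (y : ℤ) - 1 := by push_cast [hy]; ring
  rw [← Int.natCast_dvd_natCast (m := p), ← Int.natCast_dvd_natCast (m := q),
    ← Int.natCast_dvd_natCast (m := p) (n := y - 1),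
    ← Int.natCast_dvd_natCast (m := q) (n := y - 1), e]
  have h1 := cbr_not p hp y
  have h2 := cbr_not q hq y
  unfold CbrBad
  tauto

lemma cbr_mul (p q : ℕ) (hp : p.Prime) (hq : q.Prime) (hne : p ≠ q) (a : ℤ)
    (h : (p : ℤ) ∣ a) (h' : (q : ℤ) ∣ a) : ((p * q : ℕ) : ℤ) ∣ a := by
  have hc : IsCoprime (p : ℤ) (q : ℤ) :=
    Nat.isCoprime_iff_coprime.mpr ((Nat.coprime_primes hp hq).mpr hne)
  push_cast
  exact hc.mul_dvd h h'

lemma cbr_bad_congr (p q : ℕ) (hp : p.Prime) (hq : q.Prime) (hne : p ≠ q) (a b : ℤ)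
    (ha : CbrBad p q a) :
    CbrBad p q b ↔ (((p * q : ℕ) : ℤ) ∣ b - a ∨ ((p * q : ℕ) : ℤ) ∣ b - (1 - a)) := by
  constructor
  · intro hb
    rcases ha with ⟨h1, h2⟩ | ⟨h1, h2⟩ <;> rcases hb with ⟨h3, h4⟩ | ⟨h3, h4⟩
    · left
      exact cbr_mul p q hp hq hne _ (dvd_sub h3 h1) (by simpa using dvd_sub h4 h2)
    · right
      refine cbr_mul p q hp hq hne _ ?_ ?_
      · have := dvd_add h4 h1
        exact cbr_conv this (by ring)
      · have := dvd_add h3 h2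
        exact cbr_conv this (by ring)
    · right
      refine cbr_mul p q hp hq hne _ ?_ ?_
      · have := dvd_add h3 h2
        exact cbr_conv this (by ring)
      · have := dvd_add h4 h1
        exact cbr_conv this (by ring)
    · left
      exact cbr_mul p q hp hq hne _ (by simpa using dvd_sub h4 h2) (dvd_sub h3 h1)
  · push_cast
    rintro (h | h)
    · have hP := (dvd_mul_right (p : ℤ) q).trans h
      have hQ := (dvd_mul_left (q : ℤ) p).trans h
      rcases ha with ⟨h1, h2⟩ | ⟨h1, h2⟩
      · left
        exact ⟨by simpa using dvd_add hP h1, by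
          have := dvd_add hQ h2
          exact cbr_conv this (by ring)⟩
      · right
        exact ⟨by simpa using dvd_add hQ h1, by
          have := dvd_add hP h2
          exact cbr_conv this (by ring)⟩
    · have hP := (dvd_mul_right (p : ℤ) q).trans h
      have hQ := (dvd_mul_left (q : ℤ) p).trans h
      rcases ha with ⟨h1, h2⟩ | ⟨h1, h2⟩
      · right
        exact ⟨by
          have := dvd_sub hQ h2
          exact cbr_conv this (by ring), by
          have := dvd_sub hP h1
          exact cbr_conv this (by ring)⟩
      · left
        exact ⟨by
          have := dvd_sub hP h2
          exact cbr_conv this (by ring), by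
          have := dvd_sub hQ h1
          exact cbr_conv this (by ring)⟩

lemma cbr_range (M N r y : ℕ) (hr : r < M) :
    (y < N * M ∧ (M : ℤ) ∣ (y : ℤ) - r) ↔ ∃ l < N, y = r + l * M := by
  constructor
  · rintro ⟨h, hd⟩
    have hm : r ≡ y [MOD M] := (Nat.modEq_iff_dvd).mpr hd
    have hm2 : y % M = r := by
      rw [← hm, Nat.mod_eq_of_lt hr]
    refine ⟨y / M, Nat.div_lt_of_lt_mul (by rwa [mul_comm]), ?_⟩
    have := Nat.mod_add_div y M
    rw [hm2] at this
    rw [mul_comm]; exact this.symm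
  · rintro ⟨l, hl, rfl⟩
    constructor
    · have : (l + 1) * M ≤ N * M := Nat.mul_le_mul_right _ hl
      linarith [add_mul l 1 M]
    · push_cast; simp

/-- for distinct odd primes p, q and k ≥ 1, there are exactly
2·p^(k-1) integers y with 1 < y < p^k·q, gcd(y, p^k·q) ≠ 1 and
gcd(y-1, p^k·q) ≠ 1, and they are precisely the numbers x + λpq and
x' + λpq with 0 ≤ λ ≤ p^(k-1) - 1, where x and x' = pq - x + 1 are the two
integers in (1, pq) of Lemma (Statement 5). -/
theorem count_bad_residues (p q k : ℕ) (hp : p.Prime) (hq : q.Prime)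
    (hop : Odd p) (hoq : Odd q) (hne : p ≠ q) (hk : 1 ≤ k)
    (x x' : ℕ) (hx1 : 1 < x) (hx2 : x < p * q)
    (hgx : Nat.gcd x (p * q) ≠ 1) (hgx1 : Nat.gcd (x - 1) (p * q) ≠ 1)
    (hx' : x' = p * q - x + 1) :
    (((Finset.range (p ^ k * q)).filter fun y =>
      1 < y ∧ Nat.gcd y (p ^ k * q) ≠ 1 ∧ Nat.gcd (y - 1) (p ^ k * q) ≠ 1).card
        = 2 * p ^ (k - 1)) ∧
    ∀ y : ℕ,
      (1 < y ∧ y < p ^ k * q ∧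
        Nat.gcd y (p ^ k * q) ≠ 1 ∧ Nat.gcd (y - 1) (p ^ k * q) ≠ 1) ↔
      ∃ lam : ℕ, lam ≤ p ^ (k - 1) - 1 ∧
        (y = x + lam * (p * q) ∨ y = x' + lam * (p * q)) := by
  have hpos : 0 < p ^ (k - 1) := pow_pos hp.pos _
  have hM : 0 < p * q := Nat.mul_pos hp.pos hq.pos
  have hN : p ^ k * q = p ^ (k - 1) * (p * q) := by
    obtain ⟨j, rfl⟩ : ∃ j, k = j + 1 := ⟨k - 1, by omega⟩
    simp only [Nat.add_sub_cancel]; ring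
  have hbx : CbrBad p q x := by
    rw [← cbr_bad_iff p q 1 x hp hq le_rfl (by omega), pow_one]
    exact ⟨hgx, hgx1⟩
  have hx'2 : x' < p * q := by omega
  have hx'1 : 1 < x' := by omega
  have hx'c : (x' : ℤ) = ((p * q : ℕ) : ℤ) - x + 1 := by omega
  have key : ∀ y : ℕ,
      (1 < y ∧ y < p ^ k * q ∧
        Nat.gcd y (p ^ k * q) ≠ 1 ∧ Nat.gcd (y - 1) (p ^ k * q) ≠ 1) ↔
      ((∃ l < p ^ (k - 1), y = x + l * (p * q)) ∨
        (∃ l < p ^ (k - 1), y = x' + l * (p * q))) := by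
    intro y
    rw [← cbr_range _ _ x y hx2, ← cbr_range _ _ x' y hx'2, ← and_or_left, ← hN]
    have e : ((p * q : ℕ) : ℤ) ∣ (y : ℤ) - x' ↔ ((p * q : ℕ) : ℤ) ∣ (y : ℤ) - (1 - x) := by
      rw [hx'c, ← dvd_sub_self_right (b := (y : ℤ) - (1 - x))]
      apply iff_of_eq; congr 1; ring
    rw [e, ← cbr_bad_congr p q hp hq hne x y hbx]
    constructor
    · rintro ⟨h1, h2, h3⟩
      exact ⟨h2, (cbr_bad_iff p q k y hp hq hk (by omega)).mp h3⟩
    · rintro ⟨h2, h3⟩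
      have h1 : 1 < y := by
        by_contra hc
        rw [cbr_bad_congr p q hp hq hne x y hbx, ← e] at h3
        have : y % (p * q) = x ∨ y % (p * q) = x' := by
          rcases h3 with h | h
          · left
            rw [← (Nat.modEq_iff_dvd).mpr h, Nat.mod_eq_of_lt hx2]
          · right
            rw [← (Nat.modEq_iff_dvd).mpr h, Nat.mod_eq_of_lt hx'2]
        have := Nat.mod_le y (p * q)
        omega
      exact ⟨h1, h2, (cbr_bad_iff p q k y hp hq hk (by omega)).mpr h3⟩
  have hxx : x ≠ x' := by
    intro h
    have h2 : 2 * (x : ℤ) - 1 = p * q := by rw [← h] at hx'c; push_cast at hx'c; linarith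
    have hP : (p : ℤ) ∣ 2 * x - 1 := ⟨q, h2⟩
    have hQ : (q : ℤ) ∣ 2 * x - 1 := ⟨p, by rw [h2]; ring⟩
    rcases hbx with ⟨h3, h4⟩ | ⟨h3, h4⟩
    · refine cbr_not p hp x h3 ?_
      have := dvd_sub hP h3
      exact cbr_conv this (by ring)
    · refine cbr_not q hq x h3 ?_
      have := dvd_sub hQ h3
      exact cbr_conv this (by ring)
  constructor
  · have hs : ((Finset.range (p ^ k * q)).filter fun y =>
        1 < y ∧ Nat.gcd y (p ^ k * q) ≠ 1 ∧ Nat.gcd (y - 1) (p ^ k * q) ≠ 1) =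
        (Finset.range (p ^ (k - 1))).image (fun l => x + l * (p * q)) ∪
        (Finset.range (p ^ (k - 1))).image (fun l => x' + l * (p * q)) := by
      ext y
      simp only [Finset.mem_filter, Finset.mem_union, Finset.mem_image, Finset.mem_range]
      have := key y
      simp only [eq_comm (a := y)] at this
      rw [← this]
      tauto
    have hinj : ∀ r : ℕ, Function.Injective (fun l : ℕ => r + l * (p * q)) := by
      intro r a b hab
      exact Nat.eq_of_mul_eq_mul_right hM (Nat.add_left_cancel hab)
    rw [hs, Finset.card_union_of_disjoint, Finset.card_image_of_injective _ (hinj x),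
      Finset.card_image_of_injective _ (hinj x'), Finset.card_range]
    · ring
    · rw [Finset.disjoint_left]
      intro y h1 h2
      simp only [Finset.mem_image, Finset.mem_range] at h1 h2
      obtain ⟨a, -, rfl⟩ := h1
      obtain ⟨b, -, hb⟩ := h2
      have := congrArg (· % (p * q)) hb
      simp only [Nat.add_mul_mod_self_right, Nat.mod_eq_of_lt hx2,
        Nat.mod_eq_of_lt hx'2] at this
      exact hxx this.symm
  · intro y
    rw [key y]
    constructor
    · rintro (⟨l, hl, h⟩ | ⟨l, hl, h⟩)
      · exact ⟨l, by omega, Or.inl h⟩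
      · exact ⟨l, by omega, Or.inr h⟩
    · rintro ⟨l, hl, h | h⟩
      · exact Or.inl ⟨l, by omega, h⟩
      · exact Or.inr ⟨l, by omega, h⟩
end

section
/- Let m = pq where p and q are distinct odd primes, and let n be a positive integer. Then the crown C_m ⊙ K̄_n is perfect super edge-magic: for every integer k with 2mn + (5m+3)/2 ≤ k ≤ 3mn + (5m+3)/2 there exists a super edge-magic labeling of C_m ⊙ K̄_n with valence k, and conversely every super edge-magic labeling of C_m ⊙ K̄_n has valence in this range. -/
/-- successor on the cycle -/
def crownNxt (m : ℕ) (i : Fin m) : Fin m := ⟨(i.val + 1) % m, Nat.mod_lt _ i.pos⟩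

theorem crownNxt_inj (m : ℕ) : Function.Injective (crownNxt m) := by
  intro i j h
  have h1 : (i.val + 1) % m = (j.val + 1) % m := by
    simpa [crownNxt] using h
  have h2 : i.val + 1 ≡ j.val + 1 [MOD m] := h1
  have h3 : i.val ≡ j.val [MOD m] := Nat.ModEq.add_right_cancel' 1 h2
  exact Fin.ext (Nat.ModEq.eq_of_lt_of_lt h3 i.2 j.2)

/-- position code of an edge/vertex -/
def crownCode (m n : ℕ) (t : Fin m → Fin (n + 1)) :
    (Fin m ⊕ Fin m × Fin n) → Fin m × Fin (n + 1)
  | Sum.inl i => (crownNxt m i, t (crownNxt m i))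
  | Sum.inr p => (p.1, (t p.1).succAbove p.2)

theorem crownCode_inj (m n : ℕ) (t : Fin m → Fin (n + 1)) :
    Function.Injective (crownCode m n t) := by
  rintro (i | ⟨i, x⟩) (j | ⟨j, y⟩) h
  · simp only [crownCode, Prod.mk.injEq] at h
    rw [crownNxt_inj m h.1]
  · simp only [crownCode, Prod.mk.injEq] at h
    obtain ⟨h1, h2⟩ := h
    rw [h1] at h2
    exact absurd h2.symm (Fin.succAbove_ne _ _)
  · simp only [crownCode, Prod.mk.injEq] at h
    obtain ⟨h1, h2⟩ := h
    rw [← h1] at h2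
    exact absurd h2 (Fin.succAbove_ne _ _)
  · simp only [crownCode, Prod.mk.injEq] at h
    obtain ⟨h1, h2⟩ := h
    subst h1
    rw [Fin.succAbove_right_injective h2]

theorem crown_pair_inj (m n : ℕ) (c : Fin m → ℕ) (hc : Function.Injective c)
    (hcm : ∀ i, c i < m) :
    Function.Injective (fun z : Fin m × Fin (n + 1) => c z.1 + m * z.2.val) := by
  rintro ⟨i, x⟩ ⟨j, y⟩ h
  simp only at h
  have hm : 0 < m := i.pos
  have h1 : c i = c j := by
    have := congrArg (· % m) h
    simpa [Nat.add_mul_mod_self_left, Nat.mod_eq_of_lt (hcm _)] using this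
  have h2 : x.val = y.val := by
    rw [h1] at h
    exact Nat.eq_of_mul_eq_mul_left hm (Nat.add_left_cancel h)
  rw [hc h1, Fin.ext h2]

theorem crown_pair_lt (m n : ℕ) (c : Fin m → ℕ)
    (hcm : ∀ i, c i < m) (z : Fin m × Fin (n + 1)) : c z.1 + m * z.2.val < m + m * n := by
  have h1 := hcm z.1
  have h2 : m * z.2.val ≤ m * n := Nat.mul_le_mul_left _ (Nat.lt_succ_iff.mp z.2.2)
  omega

theorem range_eq_of_inj {V : Type} [Fintype V] (f : V → ℕ) (M : ℕ)
    (hM : Fintype.card V = M)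
    (hf : Function.Injective f) (h : ∀ x, 1 ≤ f x ∧ f x ≤ M) :
    Set.range f = Set.Icc 1 M := by
  classical
  have : Finset.univ.image f = Finset.Icc 1 M := by
    apply Finset.eq_of_subset_of_card_le
    · intro y hy
      obtain ⟨x, -, rfl⟩ := Finset.mem_image.mp hy
      exact Finset.mem_Icc.mpr (h x)
    · rw [Finset.card_image_of_injective _ hf, Nat.card_Icc, Finset.card_univ, hM]
      omega
  have h2 := congrArg (fun s : Finset ℕ => (s : Set ℕ)) this
  simpa using h2

theorem crown_core (m n a : ℕ) (c P v : Fin m → ℕ) 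
    (hc : Function.Injective c) (hP : Function.Injective P)
    (hcm : ∀ i, c i < m) (hPm : ∀ i, P i < m)
    (hv : ∀ i, v i + c i = a + P i) (hvN : ∀ i, v i < m * (n + 1))
    (hvc : ∀ i, v i % m = c (crownNxt m i)) :
    ∃ fv fe, IsSuperEdgeMagic (crownEnds m n) fv fe (a + 2 + 2 * (m + m * n)) := by
  classical
  let e : Fin m ≃ Fin m := Equiv.ofBijective (crownNxt m)
    (Finite.injective_iff_bijective.mp (crownNxt_inj m))
  let t : Fin m → Fin (n + 1) := fun i =>
    ⟨v (e.symm i) / m, Nat.div_lt_of_lt_mul (hvN _)⟩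
  have ht : ∀ i, c (crownNxt m i) + m * (t (crownNxt m i)).val = v i := by
    intro i
    have h1 : e.symm (crownNxt m i) = i := e.symm_apply_apply i
    simp only [t, h1]
    rw [← hvc i]
    exact Nat.mod_add_div _ _
  let fv : (Fin m ⊕ Fin m × Fin n) → ℕ := fun x =>
    c (crownCode m n t x).1 + m * (crownCode m n t x).2.val + 1
  let w : (Fin m ⊕ Fin m × Fin n) → ℕ := fun x =>
    P (crownCode m n t x).1 + m * (crownCode m n t x).2.val
  have hcard : Fintype.card (Fin m ⊕ Fin m × Fin n) = m + m * n := by simp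
  have fvinj : Function.Injective fv := by
    intro x y h
    exact crownCode_inj m n t (crown_pair_inj m n c hc hcm (Nat.add_right_cancel h))
  have winj : Function.Injective w := by
    intro x y h
    exact crownCode_inj m n t (crown_pair_inj m n P hP hPm h)
  have fvb : ∀ x, 1 ≤ fv x ∧ fv x ≤ m + m * n := by
    intro x
    have := crown_pair_lt m n c hcm (crownCode m n t x)
    simp only [fv]; omega
  have wb : ∀ x, w x < m + m * n := fun x => crown_pair_lt m n P hPm (crownCode m n t x)
  refine ⟨fv, fun x => 2 * (m + m * n) - w x, ⟨?_, ?_, ?_⟩, ?_⟩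
  rotate_left
  · apply range_eq_of_inj
    · simp [Fintype.card_sum]
    · rw [Sum.elim_injective]
      refine ⟨fvinj, ?_, ?_⟩
      · intro x y h
        have := wb x
        have := wb y
        apply winj
        simp only at h
        omega
      · intro x y h
        have := wb y
        have := fvb x
        omega
    · rintro (x | x)
      · have := fvb x
        simp only [Sum.elim_inl, hcard]; omega
      · have := wb x
        simp only [Sum.elim_inr, hcard]; omega
  · have hl : ∀ i, fv (Sum.inl i) = v i + 1 := fun i => by
      simp only [fv, crownCode]; rw [ht]
    rintro (i | ⟨i, j⟩)
    · have h1 := hl i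
      have h2 := hl (crownNxt m i)
      have h3 := wb (Sum.inl i)
      have h4 : w (Sum.inl i) = P (crownNxt m i) + m * (t (crownNxt m i)).val := rfl
      have h5 := hv (crownNxt m i)
      have h6 := ht i
      change fv (Sum.inl i) + (2 * (m + m * n) - w (Sum.inl i)) + fv (Sum.inl (crownNxt m i)) = _
      omega
    · have h1 := hl i
      have h3 := wb (Sum.inr (i, j))
      have h4 : w (Sum.inr (i, j)) = P i + m * ((t i).succAbove j).val := rfl
      have h4' : fv (Sum.inr (i, j)) = c i + m * ((t i).succAbove j).val + 1 := rfl
      have h5 := hv i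
      change fv (Sum.inl i) + (2 * (m + m * n) - w (Sum.inr (i, j))) + fv (Sum.inr (i, j)) = _
      omega
  · exact range_eq_of_inj fv _ rfl fvinj (by rw [hcard]; exact fvb)
  · rw [Sum.elim_injective]
    refine ⟨fvinj, ?_, ?_⟩
    · intro x y h
      have := wb x
      have := wb y
      apply winj
      simp only at h
      omega
    · intro x y h
      have := wb y
      have := fvb x
      omega

/-! ### Necessity -/

theorem two_sum_ge (s : Finset ℕ) (hs : ∀ x ∈ s, 1 ≤ x) :
    s.card * (s.card + 1) ≤ 2 * ∑ x ∈ s, x := by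
  induction s using Finset.induction_on_max with
  | empty => simp
  | insert a s ha ih =>
    have hna : a ∉ s := fun h => lt_irrefl _ (ha a h)
    rw [Finset.card_insert_of_notMem hna, Finset.sum_insert hna]
    have h1 := ih (fun x hx => hs x (Finset.mem_insert_of_mem hx))
    have h2 : s.card + 1 ≤ a := by
      have hsub : s ⊆ Finset.Ico 1 a := fun x hx =>
        Finset.mem_Ico.mpr ⟨hs x (Finset.mem_insert_of_mem hx), ha x hx⟩
      have := Finset.card_le_card hsub
      rw [Nat.card_Ico] at this
      have := hs a (Finset.mem_insert_self _ _)
      omega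
    nlinarith

theorem two_sum_fun_ge {m : ℕ} (f : Fin m → ℕ) (hf : Function.Injective f)
    (h1 : ∀ i, 1 ≤ f i) : m * (m + 1) ≤ 2 * ∑ i, f i := by
  classical
  have h := two_sum_ge (Finset.univ.image f) (by
    intro x hx
    obtain ⟨i, -, rfl⟩ := Finset.mem_image.mp hx
    exact h1 i)
  rw [Finset.card_image_of_injective _ hf, Finset.sum_image (fun x _ y _ h => hf h)] at h
  simpa using h

theorem two_sum_Icc (M : ℕ) : 2 * ∑ x ∈ Finset.Icc 1 M, x = M * (M + 1) := by
  induction M with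
  | zero => simp
  | succ k ih =>
    rw [Finset.sum_Icc_succ_top (by omega), mul_add, ih]; ring

theorem two_sum_range {V : Type} [Fintype V] (f : V → ℕ) (M : ℕ)
    (hf : Function.Injective f) (h : Set.range f = Set.Icc 1 M) :
    2 * ∑ x, f x = M * (M + 1) := by
  classical
  have : Finset.univ.image f = Finset.Icc 1 M := by
    apply Finset.coe_injective
    simpa using h
  rw [← two_sum_Icc, ← this, Finset.sum_image (fun x _ y _ h => hf h)]

theorem crown_necessity (m n : ℕ) (hm : 1 ≤ m) (hodd : m % 2 = 1) (fv fe) (k : ℕ)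
    (H : IsSuperEdgeMagic (crownEnds m n) fv fe k) :
      2 * m * n + (5 * m + 3) / 2 ≤ k ∧ k ≤ 3 * m * n + (5 * m + 3) / 2 := by
  classical
  obtain ⟨⟨hinj, hrange, hmag⟩, hV⟩ := H
  have hcard : Fintype.card (Fin m ⊕ Fin m × Fin n) = m + m * n := by simp
  have hall := two_sum_range _ _ hinj hrange
  rw [hcard] at hall hV
  have fvinj : Function.Injective fv := fun x y h => by
    simpa using hinj (a₁ := Sum.inl x) (a₂ := Sum.inl y) (by simpa using h)
  rw [Fintype.sum_sum_type] at hall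
  simp only [Sum.elim_inl, Sum.elim_inr] at hall
  have hb : ∀ x, 1 ≤ fv x ∧ fv x ≤ m + m * n := fun x => by
    have : fv x ∈ Set.Icc 1 (m + m * n) := hV ▸ Set.mem_range_self x
    exact this
  have hsum : ∑ e, (fv (crownEnds m n e).1 + fe e + fv (crownEnds m n e).2)
      = (m + m * n) * k := by
    rw [Finset.sum_congr rfl (fun e _ => hmag e)]
    simp
  rw [Finset.sum_add_distrib, Finset.sum_add_distrib] at hsum
  have e1 : ∑ e, fv (crownEnds m n e).1 = (n + 1) * ∑ i : Fin m, fv (Sum.inl i) := by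
    rw [Fintype.sum_sum_type, Fintype.sum_prod_type]
    simp only [crownEnds, Finset.sum_const, Finset.card_univ, Fintype.card_fin, smul_eq_mul]
    rw [← Finset.mul_sum]; ring
  have e2 : ∑ e, fv (crownEnds m n e).2 = ∑ x, fv x := by
    rw [Fintype.sum_sum_type, Fintype.sum_sum_type (f := fv)]
    congr 1
    exact Function.Bijective.sum_comp (Finite.injective_iff_bijective.mp (crownNxt_inj m))
      (fun i => fv (Sum.inl i))
  rw [e1, e2] at hsum
  set S := ∑ i : Fin m, fv (Sum.inl i) with hS
  have hlinj : Function.Injective (fun i : Fin m => fv (Sum.inl i)) := fun x y h => by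
    simpa using fvinj h
  have hlow : m * (m + 1) ≤ 2 * S := two_sum_fun_ge _ hlinj (fun i => (hb _).1)
  have hhigh := two_sum_fun_ge (fun i : Fin m => m + m * n + 1 - fv (Sum.inl i))
    (fun x y h => by
      apply hlinj
      have := hb (Sum.inl x)
      have := hb (Sum.inl y)
      simp only at h ⊢
      omega) (fun i => by have := hb (Sum.inl i); omega)
  have hsum2 : ∑ i : Fin m, (m + m * n + 1 - fv (Sum.inl i)) + S = m * (m + m * n + 1) := by
    rw [hS, ← Finset.sum_add_distrib, Finset.sum_congr rfl
      (fun i _ => Nat.sub_add_cancel (by have := hb (Sum.inl i); omega))]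
    simp
  generalize ∑ i : Fin m, (m + m * n + 1 - fv (Sum.inl i)) = S' at hhigh hsum2
  have key : m * k = S + m * (2 * (m + m * n) + 1) := by
    have : (n + 1) * (m * k) = (n + 1) * (S + m * (2 * (m + m * n) + 1)) := by
      nlinarith
    exact Nat.eq_of_mul_eq_mul_left (by omega) this
  obtain ⟨h, rfl⟩ : ∃ h, m = 2 * h + 1 := ⟨m / 2, by omega⟩
  have hd : (5 * (2 * h + 1) + 3) / 2 = 5 * h + 4 := by omega
  rw [hd]
  constructor
  · have : (2 * h + 1) * (2 * (2 * h + 1) * n + (5 * h + 4)) ≤ (2 * h + 1) * k := by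
      rw [key]; nlinarith
    exact Nat.le_of_mul_le_mul_left this (by omega)
  · have : (2 * h + 1) * k ≤ (2 * h + 1) * (3 * (2 * h + 1) * n + (5 * h + 4)) := by
      rw [key]; nlinarith
    exact Nat.le_of_mul_le_mul_left this (by omega)

/-! ### The step function and its orbit -/

/-- step of the orbit -/
def crStep (a b B p h : ℕ) (x : ℕ) : ℤ :=
  (a + b : ℤ) - (if x + b ≤ h then 0 else (p : ℤ)) + (if x = 0 then (p * B : ℤ) else 0)

/-- the orbit -/
def crOrb (a b B p h : ℕ) (i : ℕ) : ℤ :=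
  ∑ l ∈ Finset.range i, crStep a b B p h (((a + b) * l) % p)

theorem crStep_mod (a b B p h x : ℕ) : (p : ℤ) ∣ crStep a b B p h x - (a + b : ℤ) := by
  unfold crStep
  split_ifs
  · exact ⟨B, by ring⟩
  · exact ⟨0, by ring⟩
  · exact ⟨B - 1, by ring⟩
  · exact ⟨-1, by ring⟩

theorem crOrb_mod (a b B p h i : ℕ) :
    (p : ℤ) ∣ crOrb a b B p h i - (((a + b) * i : ℕ) : ℤ) := by
  induction i with
  | zero => simp [crOrb]
  | succ k ih =>
    have h1 := crStep_mod a b B p h (((a + b) * k) % p)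
    have h2 := dvd_add ih h1
    have h3 : crOrb a b B p h (k + 1) = crOrb a b B p h k +
        crStep a b B p h (((a + b) * k) % p) := Finset.sum_range_succ _ _
    rw [h3]
    have h4 : ∀ x y u : ℤ, u = y + (a + b : ℤ) →
        ((x - y) + (crStep a b B p h (((a + b) * k) % p) - (a + b : ℤ))) =
        x + crStep a b B p h (((a + b) * k) % p) - u := by
      intro x y u hu; rw [hu]; ring
    rw [h4 _ _ (((a + b) * (k + 1) : ℕ) : ℤ) (by push_cast; ring)] at h2
    exact h2

theorem crOrb_emod (a b B p h i : ℕ) :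
    crOrb a b B p h i % (p : ℤ) = ((((a + b) * i) % p : ℕ) : ℤ) := by
  rw [Int.natCast_mod]
  exact Int.emod_eq_emod_iff_emod_sub_eq_zero.mpr
      (Int.emod_eq_zero_of_dvd (crOrb_mod a b B p h i))

theorem sum_perm_mod (f : ℕ → ℤ) (s p : ℕ) (hp : 0 < p) (hs : Nat.Coprime p s) :
    ∑ l ∈ Finset.range p, f ((s * l) % p) = ∑ x ∈ Finset.range p, f x := by
  have hinj : Set.InjOn (fun l => (s * l) % p) (Finset.range p : Set ℕ) := by
    intro x hx y hy h
    have h1 : s * x ≡ s * y [MOD p] := h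
    have h2 := Nat.ModEq.cancel_left_of_coprime hs h1
    exact Nat.ModEq.eq_of_lt_of_lt h2 (by simpa using hx) (by simpa using hy)
  have himg : (Finset.range p).image (fun l => (s * l) % p) = Finset.range p := by
    apply Finset.eq_of_subset_of_card_le
    · intro y hy
      obtain ⟨x, -, rfl⟩ := Finset.mem_image.mp hy
      exact Finset.mem_range.mpr (Nat.mod_lt _ hp)
    · rw [Finset.card_image_of_injOn hinj]
  conv_rhs => rw [← himg]
  rw [Finset.sum_image hinj]

theorem sum_crStep (a b B p h : ℕ) (hb : b ≤ 1) (hp : p = 2 * h + 1) (hp3 : 1 ≤ h) :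
    ∑ x ∈ Finset.range p, crStep a b B p h x = p * ((a : ℤ) - h + B) := by
  unfold crStep
  rw [Finset.sum_add_distrib, Finset.sum_sub_distrib]
  have e1 : ∑ x ∈ Finset.range p, (if x = 0 then (p * B : ℤ) else 0) = p * B := by
    rw [Finset.sum_ite_eq' (Finset.range p) 0]
    simp; omega
  have e2 : ∑ x ∈ Finset.range p, (if x + b ≤ h then 0 else (p : ℤ)) = p * (h + b) := by
    have hsplit : p = (h + 1 - b) + (h + b) := by omega
    have : ∀ N : ℕ, ∑ x ∈ Finset.range ((h + 1 - b) + N), (if x + b ≤ h then 0 else (p : ℤ))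
        = p * N := by
      intro N
      induction N with
      | zero =>
        rw [Finset.sum_eq_zero]
        · simp
        · intro x hx
          rw [Finset.mem_range] at hx
          rw [if_pos (by omega)]
      | succ k ih =>
        rw [← add_assoc, Finset.sum_range_succ, ih, if_neg (by omega)]
        push_cast; ring
    have h2 := this (h + b)
    rw [← hsplit] at h2
    rw [h2]; push_cast; ring
  rw [e1, e2]
  simp
  ring

theorem crOrb_add (a b B p h : ℕ) (hb : b ≤ 1) (hp : p = 2 * h + 1) (hp3 : 1 ≤ h)
    (hs : Nat.Coprime p (a + b)) (i : ℕ) :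
    crOrb a b B p h (i + p) = crOrb a b B p h i + p * ((a : ℤ) - h + B) := by
  unfold crOrb
  rw [add_comm i p, Finset.sum_range_add, sum_perm_mod _ _ _ (by omega) hs,
    sum_crStep a b B p h hb hp hp3, add_comm]
  congr 1
  apply Finset.sum_congr rfl
  intro x _
  rw [mul_add, add_comm, Nat.add_mul_mod_self_right]

theorem crOrb_add_mul (a b B p h : ℕ) (hb : b ≤ 1) (hp : p = 2 * h + 1) (hp3 : 1 ≤ h)
    (hs : Nat.Coprime p (a + b)) (i t : ℕ) :
    crOrb a b B p h (i + p * t) = crOrb a b B p h i + t * (p * ((a : ℤ) - h + B)) := by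
  induction t with
  | zero => simp
  | succ k ih =>
    rw [mul_add, mul_one, ← add_assoc, crOrb_add a b B p h hb hp hp3 hs, ih]
    push_cast; ring

theorem crOrb_inj_aux (a b B p q h : ℕ) (hb : b ≤ 1) (hp : p = 2 * h + 1) (hp3 : 1 ≤ h)
    (hq : q.Prime)
    (hs : Nat.Coprime p (a + b)) (hB : ¬ (q : ℤ) ∣ (a : ℤ) - h + B) (i j : ℕ) (hij : i ≤ j)
    (hj : j < p * q)
    (H : ((p * q : ℕ) : ℤ) ∣ crOrb a b B p h j - crOrb a b B p h i) : i = j := by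
  have hpd : (p : ℤ) ∣ crOrb a b B p h j - crOrb a b B p h i :=
    dvd_trans ⟨q, by push_cast; ring⟩ H
  have h1 := crOrb_mod a b B p h i
  have h2 := crOrb_mod a b B p h j
  have h3 : (p : ℤ) ∣ ((((a + b) * j : ℕ) : ℤ) - (((a + b) * i : ℕ) : ℤ)) := by
    have := dvd_sub (dvd_add hpd h1) h2
    have e : ∀ x y u w : ℤ, x - y + (y - u) - (x - w) = w - u := by intros; ring
    rwa [e] at this
  have h4 : (a + b) * i ≡ (a + b) * j [MOD p] := (Nat.modEq_iff_dvd).mpr h3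
  have h5 := Nat.ModEq.cancel_left_of_coprime hs h4
  obtain ⟨t, ht⟩ := (Nat.modEq_iff_dvd' hij).mp h5
  have hjt : j = i + p * t := by omega
  rw [hjt, crOrb_add_mul a b B p h hb hp hp3 hs] at H
  have hp0 : (p : ℤ) ≠ 0 := by omega
  have h6 : (q : ℤ) ∣ t * ((a : ℤ) - h + B) := by
    have h7 : (p : ℤ) * q ∣ p * (t * ((a : ℤ) - h + B)) := by
      convert H using 1
      · push_cast; ring
      · ring
    exact (mul_dvd_mul_iff_left hp0).mp h7
  rcases (Nat.prime_iff_prime_int.mp hq).dvd_or_dvd h6 with h7 | h7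
  · have h8 : q ∣ t := by exact_mod_cast h7
    have h9 : t < q := by
      have : p * t < p * q := by omega
      exact Nat.lt_of_mul_lt_mul_left this
    have := Nat.eq_zero_of_dvd_of_lt h8 h9
    subst this
    simp at hjt; exact hjt.symm
  · exact absurd h7 hB

theorem crOrb_inj (a b B p q h : ℕ) (hb : b ≤ 1) (hp : p = 2 * h + 1) (hp3 : 1 ≤ h)
    (hq : q.Prime)
    (hs : Nat.Coprime p (a + b)) (hB : ¬ (q : ℤ) ∣ (a : ℤ) - h + B) (i j : ℕ)
    (hi : i < p * q) (hj : j < p * q)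
    (H : crOrb a b B p h i % ((p * q : ℕ) : ℤ) = crOrb a b B p h j % ((p * q : ℕ) : ℤ)) :
    i = j := by
  rcases le_total i j with hij | hij
  · exact crOrb_inj_aux a b B p q h hb hp hp3 hq hs hB i j hij hj
      (Int.ModEq.dvd (n := ((p * q : ℕ) : ℤ)) H)
  · exact (crOrb_inj_aux a b B p q h hb hp hp3 hq hs hB j i hij hi
      (Int.ModEq.dvd (n := ((p * q : ℕ) : ℤ)) H.symm)).symm

/-- doubling on one digit -/
def dbl (p h b x : ℕ) : ℕ := if x + b ≤ h then 2 * x + b else 2 * x + b - p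

theorem dbl_lt (p h b x : ℕ) (hp : p = 2 * h + 1) (hp3 : 1 ≤ h) (hb : b ≤ 1) (hx : x < p) :
    dbl p h b x < p := by
  unfold dbl; split_ifs <;> omega

theorem dbl_inj (p h b x y : ℕ) (hp : p = 2 * h + 1) (hb : b ≤ 1) (hx : x < p) (hy : y < p)
    (H : dbl p h b x = dbl p h b y) : x = y := by
  unfold dbl at H; split_ifs at H <;> omega

theorem dbl_eq (p h b x : ℕ) (hp : p = 2 * h + 1) (hb : b ≤ 1) :
    (dbl p h b x : ℤ) = 2 * x + b - (if x + b ≤ h then 0 else (p : ℤ)) := by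
  unfold dbl; split_ifs <;> omega

theorem dbl_bd (p h b x : ℕ) (hp : p = 2 * h + 1) (hb : b ≤ 1) (hx : x < p) :
    x ≤ dbl p h b x + h ∧ dbl p h b x ≤ x + h := by
  unfold dbl; split_ifs <;> omega

/-- second shift -/
def sh2 (B x : ℕ) : ℕ := if x = 0 then B else 0

theorem sh2_le (B x : ℕ) (hB : B ≤ 1) : sh2 B x ≤ 1 := by
  unfold sh2; split_ifs <;> omega

/-- doubling on two digits -/
def dbl2 (p hp q hq b B e : ℕ) : ℕ :=
  dbl p hp b (e % p) + p * dbl q hq (sh2 B (e % p)) (e / p)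

theorem crown_exists (p q n a hp hq : ℕ) (hpp : p.Prime) (hqp : q.Prime)
    (hp2 : p = 2 * hp + 1) (hq2 : q = 2 * hq + 1)
    (ha : hp + p * hq ≤ a) (ha2 : a + hp + p * hq < p * q * (n + 1)) :
    ∃ fv fe, IsSuperEdgeMagic (crownEnds (p * q) n) fv fe
      (a + 2 + 2 * (p * q + p * q * n)) := by
  have hp3 : 1 ≤ hp := by have := hpp.two_le; omega
  have hq3 : 1 ≤ hq := by have := hqp.two_le; omega
  have hp0 : 0 < p := hpp.pos
  have hq0 : 0 < q := hqp.pos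
  have hm0 : 0 < p * q := Nat.mul_pos hp0 hq0
  obtain ⟨b, hb, hs⟩ : ∃ b, b ≤ 1 ∧ Nat.Coprime p (a + b) := by
    by_cases h : p ∣ a
    · refine ⟨1, le_rfl, (Nat.Prime.coprime_iff_not_dvd hpp).mpr fun h2 => ?_⟩
      exact hpp.one_lt.ne' (Nat.dvd_one.mp ((Nat.dvd_add_right h).mp h2))
    · exact ⟨0, by omega, (Nat.Prime.coprime_iff_not_dvd hpp).mpr h⟩
  obtain ⟨B, hB1, hB⟩ : ∃ B : ℕ, B ≤ 1 ∧ ¬ (q : ℤ) ∣ (a : ℤ) - hp + B := by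
    by_cases h : (q : ℤ) ∣ (a : ℤ) - hp
    · refine ⟨1, le_rfl, fun h2 => ?_⟩
      have h3 : (q : ℤ) ∣ 1 := by
        have := dvd_sub h2 h
        simpa using this
      have h4 : q ∣ 1 := by exact_mod_cast h3
      exact hqp.one_lt.ne' (Nat.dvd_one.mp h4)
    · exact ⟨0, by omega, by simpa using h⟩
  set M : ℤ := ((p * q : ℕ) : ℤ) with hM
  have hMpos : 0 < M := by rw [hM]; exact_mod_cast hm0
  let c0 : ℕ → ℕ := fun i => (crOrb a b B p hp i % M).toNat
  have hc0 : ∀ i, (c0 i : ℤ) = crOrb a b B p hp i % M := fun i =>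
    Int.toNat_of_nonneg (Int.emod_nonneg _ hMpos.ne')
  have hc0lt : ∀ i, c0 i < p * q := fun i => by
    have h1 := hc0 i
    have h2 := Int.emod_lt_of_pos (crOrb a b B p hp i) hMpos
    rw [← h1, hM] at h2
    exact_mod_cast h2
  have hc0inj : ∀ i j, i < p * q → j < p * q → c0 i = c0 j → i = j := by
    intro i j hi hj h
    apply crOrb_inj a b B p q hp hb hp2 hp3 hqp hs hB i j hi hj
    rw [← hM, ← hc0, ← hc0, h]
  have hper : c0 (p * q) = c0 0 := by
    have h1 := crOrb_add_mul a b B p hp hb hp2 hp3 hs 0 q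
    rw [zero_add] at h1
    have : (c0 (p * q) : ℤ) = c0 0 := by
      rw [hc0, hc0, h1]
      have : (q : ℤ) * (p * ((a : ℤ) - hp + B)) = M * ((a : ℤ) - hp + B) := by
        rw [hM]; push_cast; ring
      rw [this, Int.add_mul_emod_self_left]
    exact_mod_cast this
  have hdig : ∀ i, c0 i % p = ((a + b) * i) % p := by
    intro i
    have h1 := crOrb_emod a b B p hp i
    have h2 : ((c0 i % p : ℕ) : ℤ) = ((((a + b) * i) % p : ℕ) : ℤ) := by
      rw [← h1, Int.natCast_mod, hc0]
      exact Int.emod_emod_of_dvd _ ⟨q, by rw [hM]; push_cast; ring⟩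
    exact_mod_cast h2
  let D : ℕ → ℕ := dbl2 p hp q hq b B
  have hdiv : ∀ e, e < p * q → e / p < q := fun e he => Nat.div_lt_of_lt_mul he
  have hmod : ∀ e, e % p < p := fun e => Nat.mod_lt _ hp0
  have hDlt : ∀ e, e < p * q → D e < p * q := by
    intro e he
    have h1 := dbl_lt p hp b (e % p) hp2 hp3 hb (hmod e)
    have h2 := dbl_lt q hq (sh2 B (e % p)) (e / p) hq2 hq3 (sh2_le _ _ hB1) (hdiv e he)
    have h3 : p * (dbl q hq (sh2 B (e % p)) (e / p) + 1) ≤ p * q := Nat.mul_le_mul_left _ h2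
    simp only [D, dbl2]
    rw [mul_add] at h3
    omega
  have hDinj : ∀ e f, e < p * q → f < p * q → D e = D f → e = f := by
    intro e f he hf h
    simp only [D, dbl2] at h
    have h1 := dbl_lt p hp b (e % p) hp2 hp3 hb (hmod e)
    have h2 := dbl_lt p hp b (f % p) hp2 hp3 hb (hmod f)
    have h3 : dbl p hp b (e % p) = dbl p hp b (f % p) := by
      have := congrArg (· % p) h
      simpa [Nat.add_mul_mod_self_left, Nat.mod_eq_of_lt h1, Nat.mod_eq_of_lt h2] using this
    have h4 := dbl_inj p hp b _ _ hp2 hb (hmod e) (hmod f) h3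
    rw [h4] at h
    have h5 := Nat.eq_of_mul_eq_mul_left hp0 (Nat.add_left_cancel h)
    have h6 := dbl_inj q hq _ _ _ hq2 (sh2_le _ _ hB1) (hdiv e he) (hdiv f hf) h5
    rw [← Nat.mod_add_div e p, ← Nat.mod_add_div f p, h4, h6]
  have hDbd : ∀ e, e < p * q → e ≤ D e + (hp + p * hq) ∧ D e ≤ e + (hp + p * hq) := by
    intro e he
    have h1 := dbl_bd p hp b (e % p) hp2 hb (hmod e)
    have h2 := dbl_bd q hq (sh2 B (e % p)) (e / p) hq2 (sh2_le _ _ hB1) (hdiv e he)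
    have h3 := Nat.mul_le_mul_left p h2.1
    have h4 := Nat.mul_le_mul_left p h2.2
    have h5 := Nat.mod_add_div e p
    rw [mul_add] at h3 h4
    simp only [D, dbl2]
    omega
  have hDstep : ∀ e, M ∣ ((a : ℤ) + D e - e) - (e + crStep a b B p hp (e % p)) := by
    intro e
    have h1 := dbl_eq p hp b (e % p) hp2 hb
    have h2 := dbl_eq q hq (sh2 B (e % p)) (e / p) hq2 (sh2_le _ _ hB1)
    have h5 : ((e % p : ℕ) : ℤ) + p * ((e / p : ℕ) : ℤ) = e := by
      exact_mod_cast Nat.mod_add_div e p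
    have h6 : (p : ℤ) * (sh2 B (e % p) : ℤ) = if e % p = 0 then (p * B : ℤ) else 0 := by
      unfold sh2; split_ifs <;> simp
    have h7 : (D e : ℤ) = dbl p hp b (e % p) +
        p * dbl q hq (sh2 B (e % p)) (e / p) := by
      simp only [D, dbl2]; push_cast; rfl
    unfold crStep
    rw [← h6, h7, h1, h2]
    refine ⟨-(if e / p + sh2 B (e % p) ≤ hq then 0 else 1), ?_⟩
    rw [hM]
    generalize ((e % p : ℕ) : ℤ) = x at *
    generalize ((e / p : ℕ) : ℤ) = y at *
    rw [← h5]
    push_cast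
    split_ifs <;> ring
  have hbd := fun i => hDbd (c0 i) (hc0lt i)
  refine crown_core (p * q) n a (fun i => c0 i) (fun i => D (c0 i))
    (fun i => a + D (c0 i) - c0 i) ?_ ?_ ?_ ?_ ?_ ?_ ?_
  · intro i j h
    exact Fin.ext (hc0inj _ _ i.2 j.2 h)
  · intro i j h
    exact Fin.ext (hc0inj _ _ i.2 j.2 (hDinj _ _ (hc0lt _) (hc0lt _) h))
  · intro i; exact hc0lt _
  · intro i; exact hDlt _ (hc0lt _)
  · intro i
    have := hbd i
    omega
  · intro i
    have := hbd i
    omega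
  · intro i
    have hle : c0 i ≤ a + D (c0 i) := by have := hbd i; omega
    have hstep : c0 (crownNxt (p * q) i) = c0 (i.val + 1) := by
      rcases Nat.lt_or_ge (i.val + 1) (p * q) with h | h
      · simp only [crownNxt]; rw [Nat.mod_eq_of_lt h]
      · have : i.val + 1 = p * q := le_antisymm i.2 h
        simp only [crownNxt]; rw [this, Nat.mod_self, hper]
    rw [hstep]
    have : (((a + D (c0 i) - c0 i) % (p * q) : ℕ) : ℤ) = c0 (i.val + 1) := by
      rw [hc0, Int.natCast_mod, Nat.cast_sub hle, ← hM]
      apply Int.emod_eq_emod_iff_emod_sub_eq_zero.mpr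
      apply Int.emod_eq_zero_of_dvd
      have h1 := hDstep (c0 i)
      have h3 : crOrb a b B p hp (i.val + 1) = crOrb a b B p hp i.val +
        crStep a b B p hp (((a + b) * i.val) % p) := Finset.sum_range_succ _ _
      rw [← hdig] at h3
      rw [h3]
      have h4 : M ∣ (c0 i : ℤ) - crOrb a b B p hp i := by
        rw [hc0]
        exact ⟨-(crOrb a b B p hp i / M), by
          have := Int.emod_add_mul_ediv (crOrb a b B p hp i) M
          linarith⟩
      have h5 := dvd_add h1 h4
      have e : ∀ x y z w : ℤ, x - (y + z) + (y - w) = x - (w + z) := by intros; ring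
      rw [e] at h5
      push_cast
      exact h5
    exact_mod_cast this

/-- for m = pq a product of two distinct odd primes and n ≥ 1,
the crown C_m ⊙ K̄_n is perfect super edge-magic: its super edge-magic
valences are exactly the integers in [2mn + (5m+3)/2, 3mn + (5m+3)/2]. -/
theorem crown_pq_perfectSuperEdgeMagic (p q n m : ℕ) (hp : p.Prime) (hq : q.Prime)
    (hop : Odd p) (hoq : Odd q) (hne : p ≠ q) (hn : 1 ≤ n) (hm : m = p * q) :
    (∀ k : ℕ, 2 * m * n + (5 * m + 3) / 2 ≤ k → k ≤ 3 * m * n + (5 * m + 3) / 2 →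
      ∃ fv fe, IsSuperEdgeMagic (crownEnds m n) fv fe k) ∧
    (∀ fv fe k, IsSuperEdgeMagic (crownEnds m n) fv fe k →
      2 * m * n + (5 * m + 3) / 2 ≤ k ∧ k ≤ 3 * m * n + (5 * m + 3) / 2) := by
  have hm1 : 1 ≤ m := by rw [hm]; exact Nat.mul_pos hp.pos hq.pos
  have hmo : m % 2 = 1 := by rw [hm]; exact Nat.odd_iff.mp (hop.mul hoq)
  refine ⟨fun k h1 h2 => ?_, fun fv fe k H => crown_necessity m n hm1 hmo fv fe k H⟩
  obtain ⟨hp', hp2⟩ := hop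
  obtain ⟨hq', hq2⟩ := hoq
  have hh : m = 2 * (hp' + p * hq') + 1 := by
    rw [hm, hq2, hp2]; ring
  have e1 : 2 * m * n = 2 * (m * n) := by ring
  have e2 : 3 * m * n = 3 * (m * n) := by ring
  rw [e1] at h1
  rw [e2] at h2
  have e3 : m * (n + 1) = m * n + m := by ring
  have := crown_exists p q n (k - 2 - 2 * (m + m * n)) hp' hq' hp hq hp2 hq2
    (by omega) (by rw [← hm, e3]; omega)
  rw [← hm] at this
  have e4 : k - 2 - 2 * (m + m * n) + 2 + 2 * (m + m * n) = k := by omega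
  rwa [e4] at this
end

section
/- Let m = pq where p and q are distinct odd primes, and let n be a positive integer. Then for every integer k with 2mn + 3m + 1 ≤ k ≤ 4mn + 3m + 2 there exists an edge-magic labeling of the crown C_m ⊙ K̄_n with valence k. -/
/-- Residue of the `i`-th cycle vertex: `i / 2` for even `i`, `(i + m) / 2` for odd `i`. -/
def crownTau (m i : ℕ) : ℕ := if i % 2 = 0 then i / 2 else (i + m) / 2

/-- Block of the `i`-th cycle vertex. -/
def crownBeta (m c s i : ℕ) : ℕ := if (i + 1) % m < s then c + 1 else c

/-- Offset of the edge sums of the star at the `i`-th cycle vertex. -/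
def crownW (m s i : ℕ) : ℕ := if (i + 1) % m < s then (i + 1) % m + m - s else (i + 1) % m - s

/-- The `j`-th natural number different from `b`. -/
def crownSkip (b j : ℕ) : ℕ := if j < b then j else j + 1

lemma crownSkip_ne (b j : ℕ) : crownSkip b j ≠ b := by
  unfold crownSkip; split_ifs <;> omega

lemma crownSkip_inj {b j j' : ℕ} (h : crownSkip b j = crownSkip b j') : j = j' := by
  unfold crownSkip at h; split_ifs at h <;> omega

lemma crownSkip_le {b j n : ℕ} (h : j < n) : crownSkip b j ≤ n := by
  unfold crownSkip; split_ifs <;> omega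

lemma crown_succ_mod {m i : ℕ} (hi : i < m) :
    ((i + 1) % m = i + 1 ∧ i + 1 < m) ∨ ((i + 1) % m = 0 ∧ i + 1 = m) := by
  rcases Nat.lt_or_ge (i + 1) m with h | h
  · exact Or.inl ⟨Nat.mod_eq_of_lt h, h⟩
  · have : i + 1 = m := by omega
    exact Or.inr ⟨by rw [this, Nat.mod_self], this⟩

lemma crown_succ_inj {m i i' : ℕ} (hi : i < m) (hi' : i' < m)
    (h : (i + 1) % m = (i' + 1) % m) : i = i' := by
  rcases crown_succ_mod hi with h1 | h1 <;> rcases crown_succ_mod hi' with h2 | h2 <;> omega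

lemma crownTau_lt {m i r : ℕ} (hm : m = 2 * r + 1) (hi : i < m) : crownTau m i < m := by
  unfold crownTau; split_ifs <;> omega

lemma crownTau_inj {m i i' r : ℕ} (hm : m = 2 * r + 1) (hi : i < m) (hi' : i' < m)
    (h : crownTau m i = crownTau m i') : i = i' := by
  unfold crownTau at h; split_ifs at h <;> omega

lemma crownTau_sum {m i r : ℕ} (hm : m = 2 * r + 1) (hi : i < m) :
    crownTau m i + crownTau m ((i + 1) % m) = r + (i + 1) % m := by
  rcases crown_succ_mod hi with h1 | h1 <;> rw [h1.1] <;> unfold crownTau <;> split_ifs <;> omega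

lemma crownW_lt {m i s : ℕ} (hs : s < m) : crownW m s i < m := by
  have := Nat.mod_lt (i + 1) (by omega : m > 0)
  unfold crownW; split_ifs <;> omega

lemma crownW_inj {m i i' s : ℕ} (hs : s < m) (hi : i < m) (hi' : i' < m)
    (h : crownW m s i = crownW m s i') : i = i' := by
  apply crown_succ_inj hi hi'
  have := Nat.mod_lt (i + 1) (by omega : m > 0)
  have := Nat.mod_lt (i' + 1) (by omega : m > 0)
  unfold crownW at h; split_ifs at h <;> omega

lemma crown_sum {m i r c s b : ℕ} (hm : m = 2 * r + 1) (hs : s < m) (hi : i < m) :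
    (crownTau m i + m * crownBeta m c s i) + (crownTau m ((i + 1) % m) + m * b)
      = r + (m * c + s) + (crownW m s i + m * b) := by
  have h := crownTau_sum hm hi
  unfold crownBeta crownW
  split_ifs
  · rw [mul_add]; omega
  · omega

lemma crown_pair {m x y x' y' : ℕ} (hx : x < m) (hx' : x' < m)
    (h : x + m * y = x' + m * y') : x = x' ∧ y = y' := by
  have hmm : x = x' := by
    have := congrArg (· % m) h
    simpa [Nat.add_mul_mod_self_left, Nat.mod_eq_of_lt hx, Nat.mod_eq_of_lt hx'] using this
  subst hmm
  refine ⟨rfl, ?_⟩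
  have : m * y = m * y' := by omega
  exact Nat.eq_of_mul_eq_mul_left (by omega) this

lemma crown_pair_lt_s8 {m n x y : ℕ} (hx : x < m) (hy : y ≤ n) : x + m * y < m * n + m := by
  have := Nat.mul_le_mul_left m hy
  omega

/-- Zero-based vertex labels (a super edge-magic labeling). -/
def crownF (m n c s : ℕ) : (Fin m ⊕ Fin m × Fin n) → ℕ
  | Sum.inl i => crownTau m i.val + m * crownBeta m c s i.val
  | Sum.inr p => crownTau m ((p.1.val + 1) % m) +
      m * crownSkip (crownBeta m c s ((p.1.val + 1) % m)) p.2.val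

/-- Zero-based edge sums. -/
def crownG (m n c s : ℕ) : (Fin m ⊕ Fin m × Fin n) → ℕ
  | Sum.inl i => crownW m s i.val + m * crownBeta m c s ((i.val + 1) % m)
  | Sum.inr p => crownW m s p.1.val +
      m * crownSkip (crownBeta m c s ((p.1.val + 1) % m)) p.2.val

lemma crownBeta_le {m n c s i : ℕ} (ha : m * c + s ≤ m * n) (hm : 0 < m) :
    crownBeta m c s i ≤ n := by
  unfold crownBeta
  split_ifs with h
  · by_contra hc
    have : m * n ≤ m * c := Nat.mul_le_mul_left m (by omega)
    omega
  · exact Nat.le_of_mul_le_mul_left (by omega : m * c ≤ m * n) hm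

lemma crownF_lt {m n c s r : ℕ} (hm : m = 2 * r + 1) (ha : m * c + s ≤ m * n)
    (v : Fin m ⊕ Fin m × Fin n) : crownF m n c s v < m * n + m := by
  rcases v with i | ⟨i, j⟩
  · exact crown_pair_lt_s8 (crownTau_lt hm i.2) (crownBeta_le ha (by omega))
  · exact crown_pair_lt_s8 (crownTau_lt hm (Nat.mod_lt _ (by omega))) (crownSkip_le j.2)

lemma crownG_lt {m n c s : ℕ} (hs : s < m) (ha : m * c + s ≤ m * n)
    (v : Fin m ⊕ Fin m × Fin n) : crownG m n c s v < m * n + m := by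
  rcases v with i | ⟨i, j⟩
  · exact crown_pair_lt_s8 (crownW_lt hs) (crownBeta_le ha (by omega))
  · exact crown_pair_lt_s8 (crownW_lt hs) (crownSkip_le j.2)

lemma crownF_inj {m n c s r : ℕ} (hm : m = 2 * r + 1) :
    Function.Injective (crownF m n c s) := by
  have hml : ∀ x, x % m < m := fun x => Nat.mod_lt _ (by omega)
  rintro (i | ⟨i, j⟩) (i' | ⟨i', j'⟩) h <;> simp only [crownF] at h
  · obtain ⟨h1, -⟩ := crown_pair (crownTau_lt hm i.2) (crownTau_lt hm i'.2) h
    rw [Fin.ext (crownTau_inj hm i.2 i'.2 h1)]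
  · obtain ⟨h1, h2⟩ := crown_pair (crownTau_lt hm i.2) (crownTau_lt hm (hml _)) h
    have h3 := crownTau_inj hm i.2 (hml _) h1
    rw [← h3] at h2
    exact absurd h2.symm (crownSkip_ne _ _)
  · obtain ⟨h1, h2⟩ := crown_pair (crownTau_lt hm (hml _)) (crownTau_lt hm i'.2) h
    have h3 := crownTau_inj hm (hml _) i'.2 h1
    rw [h3] at h2
    exact absurd h2 (crownSkip_ne _ _)
  · obtain ⟨h1, h2⟩ := crown_pair (crownTau_lt hm (hml _)) (crownTau_lt hm (hml _)) h
    have h3 := Fin.ext (crown_succ_inj i.2 i'.2 (crownTau_inj hm (hml _) (hml _) h1))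
    subst h3
    rw [Fin.ext (crownSkip_inj h2)]

lemma crownG_inj {m n c s : ℕ} (hs : s < m) :
    Function.Injective (crownG m n c s) := by
  rintro (i | ⟨i, j⟩) (i' | ⟨i', j'⟩) h <;> simp only [crownG] at h <;>
    obtain ⟨h1, h2⟩ := crown_pair (crownW_lt hs) (crownW_lt hs) h <;>
    have h3 := Fin.ext (crownW_inj hs i.2 i'.2 h1) <;> subst h3
  · rfl
  · exact absurd h2.symm (crownSkip_ne _ _)
  · exact absurd h2 (crownSkip_ne _ _)
  · rw [Fin.ext (crownSkip_inj h2)]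

lemma crownFG {m n c s r : ℕ} (hm : m = 2 * r + 1) (hs : s < m) (e : Fin m ⊕ Fin m × Fin n) :
    crownF m n c s (crownEnds m n e).1 + crownF m n c s (crownEnds m n e).2
      = r + (m * c + s) + crownG m n c s e := by
  rcases e with i | ⟨i, j⟩
  · exact crown_sum hm hs i.2
  · exact crown_sum hm hs i.2

/-- The result for every odd `m`. -/
lemma crown_odd_edgeMagic {m n r a ε : ℕ} (hm : m = 2 * r + 1) (ha : a ≤ m * n) (hε : ε ≤ 1) :
    ∃ fv fe, IsEdgeMagic (crownEnds m n) fv fe (2 * (m * n) + 3 * m + 1 + 2 * a + ε) := by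
  have hm0 : 0 < m := by omega
  obtain ⟨c, s, hs, rfl⟩ : ∃ c s, s < m ∧ a = m * c + s :=
    ⟨a / m, a % m, Nat.mod_lt _ hm0, (Nat.div_add_mod a m).symm⟩
  have hcard : Fintype.card (Fin m ⊕ Fin m × Fin n) = m * n + m := by
    simp [add_comm]
  have hF := fun v => crownF_lt (n := n) hm ha v
  have hG := fun v => crownG_lt (n := n) hs ha v
  have hinj : Function.Injective
      (Sum.elim (fun v => 2 * crownF m n c s v + 1 + ε)
        (fun e => 2 * (m * n + m) - 2 * crownG m n c s e - ε)) := by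
    rintro (x | x) (y | y) h <;> simp only [Sum.elim_inl, Sum.elim_inr] at h
    · rw [crownF_inj hm (show crownF m n c s x = crownF m n c s y by omega)]
    · have := hG y; omega
    · have := hG x; omega
    · have h1 := hG x
      have h2 := hG y
      rw [crownG_inj hs (show crownG m n c s x = crownG m n c s y by omega)]
  refine ⟨fun v => 2 * crownF m n c s v + 1 + ε,
    fun e => 2 * (m * n + m) - 2 * crownG m n c s e - ε, hinj, ?_, ?_⟩
  · have hsub : Finset.univ.image (Sum.elim (fun v => 2 * crownF m n c s v + 1 + ε)
        (fun e => 2 * (m * n + m) - 2 * crownG m n c s e - ε)) =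
        Finset.Icc 1 ((m * n + m) + (m * n + m)) := by
      apply Finset.eq_of_subset_of_card_le
      · intro z hz
        obtain ⟨x, -, rfl⟩ := Finset.mem_image.1 hz
        rw [Finset.mem_Icc]
        rcases x with x | x <;> simp only [Sum.elim_inl, Sum.elim_inr]
        · have := hF x; omega
        · have := hG x; omega
      · rw [Finset.card_image_of_injective _ hinj, Finset.card_univ, Fintype.card_sum, hcard]
        simp
    rw [hcard, ← Finset.coe_Icc, ← hsub]
    simp
  · intro e
    have h1 := crownFG (n := n) (c := c) (s := s) hm hs e
    have h2 := hG e
    dsimp only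
    omega

/-- for m = pq a product of two distinct odd primes and n ≥ 1,
every integer k with 2mn + 3m + 1 ≤ k ≤ 4mn + 3m + 2 is the valence of an
edge-magic labeling of the crown C_m ⊙ K̄_n. -/
theorem crown_pq_edgeMagic_range (p q n m : ℕ) (hp : p.Prime) (hq : q.Prime)
    (hop : Odd p) (hoq : Odd q) (hne : p ≠ q) (hn : 1 ≤ n) (hm : m = p * q) :
    ∀ k : ℕ, 2 * m * n + 3 * m + 1 ≤ k → k ≤ 4 * m * n + 3 * m + 2 →
      ∃ fv fe, IsEdgeMagic (crownEnds m n) fv fe k := by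
  intro k h1 h2
  obtain ⟨r, hr⟩ : Odd m := hm ▸ hop.mul hoq
  have e1 : 2 * m * n = 2 * (m * n) := by ring
  have e2 : 4 * m * n = 4 * (m * n) := by ring
  rw [e1] at h1
  rw [e2] at h2
  have h3 := crown_odd_edgeMagic (n := n) (a := (k - (2 * (m * n) + 3 * m + 1)) / 2)
    (ε := (k - (2 * (m * n) + 3 * m + 1)) % 2) hr (by omega) (by omega)
  have e3 : 2 * (m * n) + 3 * m + 1 + 2 * ((k - (2 * (m * n) + 3 * m + 1)) / 2)
      + (k - (2 * (m * n) + 3 * m + 1)) % 2 = k := by omega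
  rwa [e3] at h3
end

section
/- Let m = pq where p and q are distinct odd primes, and let n be a positive integer. Then the crown C_m ⊙ K̄_n is perfect edge-magic: for every integer k with 2mn + (5m+3)/2 ≤ k ≤ 4mn + (7m+3)/2 there exists an edge-magic labeling of C_m ⊙ K̄_n with valence k. -/
/-- Uniqueness of base-`m` digits. -/
lemma digit_unique {m r1 r2 d1 d2 : ℕ} (h1 : r1 < m) (h2 : r2 < m)
    (h : r1 + m * d1 = r2 + m * d2) : r1 = r2 ∧ d1 = d2 := by
  have hr : r1 = r2 := by
    have := congrArg (· % m) h
    simpa [Nat.add_mul_mod_self_left, Nat.mod_eq_of_lt h1, Nat.mod_eq_of_lt h2] using this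
  subst hr
  exact ⟨rfl, Nat.eq_of_mul_eq_mul_left (by omega) (Nat.add_left_cancel h)⟩

/-- Zero-based residue of the cycle vertex `i`. -/
def resid (h i : ℕ) : ℕ := if i % 2 = 0 then i / 2 else h + 1 + i / 2

/-- The successor on the cycle. -/
def nxt (h i : ℕ) : ℕ := (i + 1) % (2 * h + 1)

/-- Digit of the cycle vertex `i`. -/
def dig (h l i : ℕ) : ℕ := (l + 2 * h - nxt h i) / (2 * h + 1)

/-- Enumeration of the digits different from `e`. -/
def skip (e j : ℕ) : ℕ := if j < e then j else j + 1

lemma nxt_cases {h i : ℕ} (hi : i < 2 * h + 1) :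
    (i < 2 * h ∧ nxt h i = i + 1) ∨ (i = 2 * h ∧ nxt h i = 0) := by
  unfold nxt
  rcases Nat.lt_or_ge i (2 * h) with hlt | hge
  · left; exact ⟨hlt, Nat.mod_eq_of_lt (by omega)⟩
  · right
    have : i = 2 * h := by omega
    subst this
    simp

lemma nxt_lt {h i : ℕ} : nxt h i < 2 * h + 1 := Nat.mod_lt _ (by omega)

lemma nxt_inj {h i j : ℕ} (hi : i < 2 * h + 1) (hj : j < 2 * h + 1)
    (hij : nxt h i = nxt h j) : i = j := by
  have := nxt_cases hi
  have := nxt_cases hj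
  omega

lemma resid_lt {h i : ℕ} (hi : i < 2 * h + 1) : resid h i < 2 * h + 1 := by
  unfold resid; split <;> omega

lemma resid_inj {h i j : ℕ} (hi : i < 2 * h + 1) (hj : j < 2 * h + 1)
    (hij : resid h i = resid h j) : i = j := by
  unfold resid at hij; split at hij <;> split at hij <;> omega

lemma resid_add {h i : ℕ} (hi : i < 2 * h + 1) :
    resid h i + resid h (nxt h i) = h + nxt h i := by
  rcases nxt_cases hi with ⟨h1, h2⟩ | ⟨h1, h2⟩
  · rw [h2]; unfold resid; split <;> split <;> omega
  · rw [h2, h1]; unfold resid; split <;> split <;> omega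

lemma dig_spec {h l i : ℕ} :
    ∃ b, b < 2 * h + 1 ∧ nxt h i + (2 * h + 1) * dig h l i = l + b := by
  have h1 : nxt h i < 2 * h + 1 := nxt_lt
  have h2 := Nat.div_add_mod (l + 2 * h - nxt h i) (2 * h + 1)
  have h3 := Nat.mod_lt (l + 2 * h - nxt h i) (show 2 * h + 1 > 0 by omega)
  unfold dig
  refine ⟨2 * h - (l + 2 * h - nxt h i) % (2 * h + 1), by omega, ?_⟩
  generalize (2 * h + 1) * ((l + 2 * h - nxt h i) / (2 * h + 1)) = X at *
  omega

lemma dig_le {h l i n : ℕ} (hl : l ≤ (2 * h + 1) * n) : dig h l i ≤ n := by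
  unfold dig
  apply Nat.le_of_lt_succ
  rw [Nat.div_lt_iff_lt_mul (by omega)]
  have : n.succ * (2 * h + 1) = (2 * h + 1) * n + (2 * h + 1) := by
    rw [Nat.succ_mul, Nat.mul_comm]
  omega

lemma skip_ne (e j : ℕ) : skip e j ≠ e := by unfold skip; split <;> omega

lemma skip_inj {e j j' : ℕ} (hh : skip e j = skip e j') : j = j' := by
  unfold skip at hh; split at hh <;> split at hh <;> omega

lemma skip_le {e j n : ℕ} (hj : j < n) : skip e j ≤ n := by unfold skip; split <;> omega

/-- The vertex labelling; leaves of `v_i` share the residue of `v_{i+1}`. -/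
def lab (h l n : ℕ) : Fin (2 * h + 1) ⊕ Fin (2 * h + 1) × Fin n → ℕ
  | Sum.inl i => resid h i + (2 * h + 1) * dig h l i + 1
  | Sum.inr p => resid h (nxt h p.1) + (2 * h + 1) * skip (dig h l (nxt h p.1)) p.2 + 1

/-- The sum of the labels at the ends of an edge. -/
def esum (h l n : ℕ) (e : Fin (2 * h + 1) ⊕ Fin (2 * h + 1) × Fin n) : ℕ :=
  lab h l n (crownEnds (2 * h + 1) n e).1 + lab h l n (crownEnds (2 * h + 1) n e).2

lemma lab_inj (h l n : ℕ) : Function.Injective (lab h l n) := by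
  rintro (i | ⟨i, j⟩) (i' | ⟨i', j'⟩) hh <;> simp only [lab, Nat.add_right_cancel_iff] at hh
  · have := (digit_unique (resid_lt i.2) (resid_lt i'.2) hh).1
    rw [Fin.ext (resid_inj i.2 i'.2 this)]
  · obtain ⟨h1, h2⟩ := digit_unique (resid_lt i.2) (resid_lt nxt_lt) hh
    have h3 := resid_inj i.2 nxt_lt h1
    rw [← h3] at h2
    exact absurd h2.symm (skip_ne _ _)
  · obtain ⟨h1, h2⟩ := digit_unique (resid_lt nxt_lt) (resid_lt i'.2) hh
    have h3 := resid_inj nxt_lt i'.2 h1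
    rw [h3] at h2
    exact absurd h2 (skip_ne _ _)
  · obtain ⟨h1, h2⟩ := digit_unique (resid_lt nxt_lt) (resid_lt nxt_lt) hh
    have h3 := resid_inj nxt_lt nxt_lt h1
    rw [h3] at h2
    have h4 := Fin.ext (nxt_inj i.2 i'.2 h3)
    have h5 := Fin.ext (skip_inj h2)
    rw [h4, h5]

lemma lab_mem {h l n : ℕ} (hl : l ≤ (2 * h + 1) * n) (v) :
    1 ≤ lab h l n v ∧ lab h l n v ≤ (2 * h + 1) * n + (2 * h + 1) := by
  rcases v with i | ⟨i, j⟩ <;> simp only [lab]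
  · have h1 := resid_lt i.2
    have h2 := Nat.mul_le_mul_left (2 * h + 1) (dig_le (i := i.1) hl)
    omega
  · have h1 : resid h (nxt h i) < 2 * h + 1 := resid_lt nxt_lt
    have h2 := Nat.mul_le_mul_left (2 * h + 1)
      (skip_le (e := dig h l (nxt h i)) j.2)
    omega

/-- Digit of an edge sum. -/
def edig (h l n : ℕ) : Fin (2 * h + 1) ⊕ Fin (2 * h + 1) × Fin n → ℕ
  | Sum.inl i => dig h l (nxt h i)
  | Sum.inr p => skip (dig h l (nxt h p.1)) p.2

/-- The cycle vertex owning an edge. -/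
def eown (h n : ℕ) : Fin (2 * h + 1) ⊕ Fin (2 * h + 1) × Fin n → Fin (2 * h + 1)
  | Sum.inl i => i
  | Sum.inr p => p.1

lemma esum_eq (h l n : ℕ) (e) :
    esum h l n e = h + 2 + (nxt h (eown h n e) + (2 * h + 1) * dig h l (eown h n e))
      + (2 * h + 1) * edig h l n e := by
  rcases e with i | ⟨i, j⟩
  · have := resid_add i.2
    simp only [esum, crownEnds, lab, eown, edig]
    change _ + (resid h (nxt h i) + (2 * h + 1) * dig h l (nxt h i) + 1) = _
    omega
  · have := resid_add i.2
    simp only [esum, crownEnds, lab, eown, edig]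
    omega

lemma edig_le {h l n : ℕ} (hl : l ≤ (2 * h + 1) * n) (e) : edig h l n e ≤ n := by
  rcases e with i | ⟨i, j⟩
  · exact dig_le hl
  · exact skip_le j.2

lemma esum_mem {h l n : ℕ} (hl : l ≤ (2 * h + 1) * n) (e) :
    h + 2 + l ≤ esum h l n e ∧
      esum h l n e < h + 2 + l + ((2 * h + 1) * n + (2 * h + 1)) := by
  rw [esum_eq]
  obtain ⟨b, hb, hb'⟩ := dig_spec (h := h) (l := l) (i := eown h n e)
  rw [hb']
  have := Nat.mul_le_mul_left (2 * h + 1) (edig_le hl e)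
  omega

lemma esum_inj (h l n : ℕ) : Function.Injective (esum h l n) := by
  intro e e' hh
  rw [esum_eq, esum_eq] at hh
  obtain ⟨b, hb, h1⟩ := dig_spec (h := h) (l := l) (i := eown h n e)
  obtain ⟨b', hb', h1'⟩ := dig_spec (h := h) (l := l) (i := eown h n e')
  rw [h1, h1'] at hh
  obtain ⟨h2, h3⟩ := digit_unique hb hb' (d1 := edig h l n e) (d2 := edig h l n e') (by omega)
  have h4 := (digit_unique nxt_lt nxt_lt (h1.trans ((congrArg (l + ·) h2).trans h1'.symm))).1
  have h5 : eown h n e = eown h n e' := Fin.ext (nxt_inj (Fin.is_lt _) (Fin.is_lt _) h4)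
  rcases e with i | ⟨i, j⟩ <;> rcases e' with i' | ⟨i', j'⟩ <;>
    simp only [eown, edig] at h3 h5 <;> subst h5
  · rfl
  · exact absurd h3.symm (skip_ne _ _)
  · exact absurd h3 (skip_ne _ _)
  · rw [Fin.ext (skip_inj h3)]

/-- An injective labelling into the right interval with constant edge weights is edge-magic. -/
lemma isEdgeMagic_of {V E : Type} [Fintype V] [Fintype E] (ends : E → V × V)
    (fv : V → ℕ) (fe : E → ℕ) (k N : ℕ) (hN : Fintype.card V + Fintype.card E = N)
    (hv : Function.Injective fv) (he : Function.Injective fe) (hve : ∀ v e, fv v ≠ fe e)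
    (hvm : ∀ v, 1 ≤ fv v ∧ fv v ≤ N) (hem : ∀ e, 1 ≤ fe e ∧ fe e ≤ N)
    (hk : ∀ e, fv (ends e).1 + fe e + fv (ends e).2 = k) : IsEdgeMagic ends fv fe k := by
  have hinj : Function.Injective (Sum.elim fv fe) := hv.sumElim he hve
  refine ⟨hinj, ?_, hk⟩
  rw [hN]
  have hs : Finset.univ.image (Sum.elim fv fe) = Finset.Icc 1 N := by
    apply Finset.eq_of_subset_of_card_le
    · intro x hx
      simp only [Finset.mem_image, Finset.mem_univ, true_and] at hx
      obtain ⟨v | e, rfl⟩ := hx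
      · exact Finset.mem_Icc.2 (hvm v)
      · exact Finset.mem_Icc.2 (hem e)
    · rw [Finset.card_image_of_injective _ hinj]
      simp [hN]
  rw [← Finset.coe_Icc, ← hs]
  simp

/-- The crown `C_m ⊙ K̄_n` is perfect edge-magic for every odd `m = 2h+1`. -/
lemma crown_odd (h n : ℕ) (hn : 1 ≤ n) (k : ℕ)
    (h1 : 2 * ((2 * h + 1) * n) + 5 * h + 4 ≤ k)
    (h2 : k ≤ 4 * ((2 * h + 1) * n) + 7 * h + 5) :
    ∃ fv fe, IsEdgeMagic (crownEnds (2 * h + 1) n) fv fe k := by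
  have hX : 2 * h + 1 ≤ (2 * h + 1) * n := Nat.le_mul_of_pos_right _ hn
  have hcard : Fintype.card (Fin (2 * h + 1) ⊕ Fin (2 * h + 1) × Fin n) +
      Fintype.card (Fin (2 * h + 1) ⊕ Fin (2 * h + 1) × Fin n)
      = 2 * ((2 * h + 1) * n + (2 * h + 1)) := by
    simp only [Fintype.card_sum, Fintype.card_prod, Fintype.card_fin]; ring
  have hmem := fun l hl v => lab_mem (h := h) (l := l) (n := n) hl v
  have smem := fun l hl v => esum_mem (h := h) (l := l) (n := n) hl v
  have sdef : ∀ l e, esum h l n e = lab h l n (crownEnds (2 * h + 1) n e).1 +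
    lab h l n (crownEnds (2 * h + 1) n e).2 := fun _ _ => rfl
  have linj := fun l => lab_inj h l n
  have sinj := fun l => esum_inj h l n
  generalize (2 * h + 1) * n = X at *
  obtain ⟨M, hM⟩ : ∃ M, M = X + (2 * h + 1) := ⟨_, rfl⟩
  rw [← hM] at hcard hmem smem
  by_cases c1 : k ≤ 2 * M + h + 2 + X
  · -- super edge-magic
    obtain ⟨l, hl⟩ : ∃ l, k = 2 * M + (h + 2 + l) := ⟨k - (2 * M + (h + 2)), by omega⟩
    have hlX : l ≤ X := by omega
    refine ⟨lab h l n, fun e => k - esum h l n e,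
      isEdgeMagic_of _ _ _ _ _ hcard (linj l) ?_ ?_ ?_ ?_ ?_⟩
    · intro e e' hh
      have := smem l hlX e
      have := smem l hlX e'
      simp only at hh
      exact sinj l (by omega)
    · intro v e
      have := smem l hlX e
      have := hmem l hlX v
      omega
    · intro v
      have := hmem l hlX v
      omega
    · intro e
      have := smem l hlX e
      omega
    · intro e
      have := smem l hlX e
      have := sdef l e
      omega
  by_cases c3 : 4 * M + 1 ≤ k + h + X
  · obtain ⟨l, hl⟩ : ∃ l, k + (h + 2 + l) = 4 * M + 3 := ⟨4 * M + 3 - (k + (h + 2)), by omega⟩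
    have hlX : l ≤ X := by omega
    refine ⟨fun v => 2 * M + 1 - lab h l n v, fun e => esum h l n e - (h + 1 + l),
      isEdgeMagic_of _ _ _ _ _ hcard ?_ ?_ ?_ ?_ ?_ ?_⟩
    · intro v v' hh
      have := hmem l hlX v
      have := hmem l hlX v'
      simp only at hh
      exact linj l (by omega)
    · intro e e' hh
      have := smem l hlX e
      have := smem l hlX e'
      simp only at hh
      exact sinj l (by omega)
    · intro v e
      have := smem l hlX e
      have := hmem l hlX v
      omega
    · intro v
      have := hmem l hlX v
      omega
    · intro e
      have := smem l hlX e
      omega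
    · intro e
      have := smem l hlX e
      have := sdef l e
      have := hmem l hlX (crownEnds (2 * h + 1) n e).1
      have := hmem l hlX (crownEnds (2 * h + 1) n e).2
      omega
  · -- doubling, with `t` choosing odd or even vertex labels
    obtain ⟨l, t, ht, hl⟩ : ∃ l t, t ≤ 1 ∧ k + 2 = 2 * (h + 2 + l) + 2 * M + t :=
      ⟨(k + 2 - 2 * M) / 2 - (h + 2), k % 2, by omega, by omega⟩
    have hlX : l ≤ X := by omega
    refine ⟨fun v => 2 * lab h l n v - 1 + t,
      fun e => 2 * (h + 2 + l + M - esum h l n e) - t,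
      isEdgeMagic_of _ _ _ _ _ hcard ?_ ?_ ?_ ?_ ?_ ?_⟩
    · intro v v' hh
      have := hmem l hlX v
      have := hmem l hlX v'
      simp only at hh
      exact linj l (by omega)
    · intro e e' hh
      have := smem l hlX e
      have := smem l hlX e'
      simp only at hh
      exact sinj l (by omega)
    · intro v e
      have := smem l hlX e
      have := hmem l hlX v
      omega
    · intro v
      have := hmem l hlX v
      omega
    · intro e
      have := smem l hlX e
      omega
    · intro e
      have := smem l hlX e
      have := sdef l e
      have := hmem l hlX (crownEnds (2 * h + 1) n e).1
      have := hmem l hlX (crownEnds (2 * h + 1) n e).2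
      omega

/-- for m = pq a product of two distinct odd primes and n ≥ 1,
the crown C_m ⊙ K̄_n is perfect edge-magic: every integer k with
2mn + (5m+3)/2 ≤ k ≤ 4mn + (7m+3)/2 is the valence of an edge-magic labeling. -/
theorem crown_pq_perfectEdgeMagic (p q n m : ℕ) (hp : p.Prime) (hq : q.Prime)
    (hop : Odd p) (hoq : Odd q) (hne : p ≠ q) (hn : 1 ≤ n) (hm : m = p * q) :
    ∀ k : ℕ, 2 * m * n + (5 * m + 3) / 2 ≤ k → k ≤ 4 * m * n + (7 * m + 3) / 2 →
      ∃ fv fe, IsEdgeMagic (crownEnds m n) fv fe k := by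
  intro k h1 h2
  have hodd : Odd m := hm ▸ hop.mul hoq
  obtain ⟨h, rfl⟩ := hodd
  rw [Nat.mul_assoc] at h1 h2
  exact crown_odd h n hn k (by omega) (by omega)
end

section
/- Let m ≥ 3 and n ≥ 1 be integers. If the cycle C_m admits an edge-magic labeling with valence v, then for each integer r with 1 ≤ r ≤ n+1 the crown C_m ⊙ K̄_n admits an edge-magic labeling with valence (n+1)(v − 2) + r + 1. Consequently, if g and g′ are edge-magic labelings of C_m with val(g) < val(g′), then all n+1 valences produced from g are strictly smaller than all n+1 valences produced from g′. -/
/-- Successor on the cycle. -/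
def cycNext (m : ℕ) (i : Fin m) : Fin m := ⟨(i.val + 1) % m, Nat.mod_lt _ i.pos⟩

lemma cycNext_inj (m : ℕ) : Function.Injective (cycNext m) := by
  intro a b h
  have h1 : (a.val + 1) % m = (b.val + 1) % m := congrArg Fin.val h
  have h2 : a.val % m = b.val % m := Nat.ModEq.add_right_cancel' 1 h1
  rw [Nat.mod_eq_of_lt a.2, Nat.mod_eq_of_lt b.2] at h2
  exact Fin.ext h2

/-- Blown-up label. -/
def blow {X : Type} (F : X → ℕ) (N : ℕ) (p : X × Fin N) : ℕ := N * (F p.1 - 1) + p.2.val + 1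

lemma blow_inj {X : Type} (F : X → ℕ) (N : ℕ) (hF : Function.Injective F) (h1 : ∀ x, 1 ≤ F x) :
    Function.Injective (blow F N) := by
  rintro ⟨x, c⟩ ⟨y, d⟩ h
  simp only [blow] at h
  have hN : 0 < N := c.pos
  have h' : N * (F x - 1) + c.val = N * (F y - 1) + d.val := by omega
  have e1 := congrArg (· / N) h'
  have e2 := congrArg (· % N) h'
  simp only [Nat.mul_add_div hN, Nat.div_eq_of_lt c.2, Nat.div_eq_of_lt d.2] at e1
  simp only [Nat.mul_add_mod, Nat.mod_eq_of_lt c.2, Nat.mod_eq_of_lt d.2] at e2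
  have hx := h1 x
  have hy := h1 y
  have : F x = F y := by omega
  rw [hF this, Fin.ext e2]

/-- Vertex positions in the product. -/
def vpos (m n : ℕ) (r : Fin (n + 1)) : Fin m ⊕ Fin m × Fin n → (Fin m ⊕ Fin m) × Fin (n + 1)
  | Sum.inl i => (Sum.inl i, r)
  | Sum.inr p => (Sum.inl (cycNext m p.1), r.succAbove p.2)

/-- Edge positions in the product. -/
def epos (m n : ℕ) (r : Fin (n + 1)) : Fin m ⊕ Fin m × Fin n → (Fin m ⊕ Fin m) × Fin (n + 1)
  | Sum.inl i => (Sum.inr i, r.rev)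
  | Sum.inr p => (Sum.inr p.1, (r.succAbove p.2).rev)

lemma pos_inj (m n : ℕ) (r : Fin (n + 1)) :
    Function.Injective (Sum.elim (vpos m n r) (epos m n r)) := by
  rintro ((i | ⟨i, j⟩) | (i | ⟨i, j⟩)) ((i' | ⟨i', j'⟩) | (i' | ⟨i', j'⟩)) h <;>
    simp only [Sum.elim_inl, Sum.elim_inr, vpos, epos, Prod.mk.injEq, Sum.inl.injEq, Sum.inr.injEq,
      Fin.rev_inj, Fin.succAbove_right_inj, reduceCtorEq, false_and, Fin.succAbove_ne,
      (Fin.succAbove_ne _ _).symm, and_false, (cycNext_inj m).eq_iff] at h ⊢ <;> simp_all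

lemma cycle_facts {m v : ℕ} {fv fe : Fin m → ℕ} (h : IsEdgeMagic (cycleEnds m) fv fe v) :
    ∀ x, 1 ≤ Sum.elim fv fe x ∧ Sum.elim fv fe x ≤ m + m := by
  intro x
  have : Sum.elim fv fe x ∈ Set.range (Sum.elim fv fe) := ⟨x, rfl⟩
  rw [h.2.1] at this
  simpa using this

lemma valence_ge {m v : ℕ} (hm : 3 ≤ m) {fv fe : Fin m → ℕ}
    (h : IsEdgeMagic (cycleEnds m) fv fe v) : 3 ≤ v := by
  have i : Fin m := ⟨0, by omega⟩
  have h0 := h.2.2 i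
  have h1 := (cycle_facts h (Sum.inl (cycleEnds m i).1)).1
  have h2 := (cycle_facts h (Sum.inl (cycleEnds m i).2)).1
  have h3 := (cycle_facts h (Sum.inr i)).1
  simp only [Sum.elim_inl, Sum.elim_inr] at h1 h2 h3
  omega

/-- an edge-magic labeling of C_m with valence v yields, for
each 1 ≤ r ≤ n+1, an edge-magic labeling of the crown C_m ⊙ K̄_n with
valence (n+1)(v-2) + r + 1; and valences produced from a labeling of
smaller valence are strictly smaller than those from a larger one. -/
theorem crown_valences_from_cycle (m n : ℕ) (hm : 3 ≤ m) (hn : 1 ≤ n) :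
    (∀ v : ℕ, (∃ fv fe, IsEdgeMagic (cycleEnds m) fv fe v) →
      ∀ r : ℕ, 1 ≤ r → r ≤ n + 1 →
        ∃ fv fe, IsEdgeMagic (crownEnds m n) fv fe ((n + 1) * (v - 2) + r + 1)) ∧
    (∀ v v' : ℕ, (∃ fv fe, IsEdgeMagic (cycleEnds m) fv fe v) →
      (∃ fv fe, IsEdgeMagic (cycleEnds m) fv fe v') → v < v' →
      ∀ r r' : ℕ, 1 ≤ r → r ≤ n + 1 → 1 ≤ r' → r' ≤ n + 1 →
        (n + 1) * (v - 2) + r + 1 < (n + 1) * (v' - 2) + r' + 1) := by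
  constructor
  · rintro v ⟨fv, fe, h⟩ r hr1 hr2
    have hb := cycle_facts h
    obtain ⟨r0, rfl⟩ : ∃ r0 : Fin (n + 1), r = r0.val + 1 :=
      ⟨⟨r - 1, by omega⟩, by simp only []; omega⟩
    have key : Sum.elim (blow (Sum.elim fv fe) (n + 1) ∘ vpos m n r0)
        (blow (Sum.elim fv fe) (n + 1) ∘ epos m n r0) =
        blow (Sum.elim fv fe) (n + 1) ∘ Sum.elim (vpos m n r0) (epos m n r0) := by
      rw [Sum.comp_elim]
    have hinj : Function.Injective (Sum.elim (blow (Sum.elim fv fe) (n + 1) ∘ vpos m n r0)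
        (blow (Sum.elim fv fe) (n + 1) ∘ epos m n r0)) := by
      rw [key]
      exact (blow_inj _ _ h.1 fun x => (hb x).1).comp (pos_inj m n r0)
    refine ⟨_, _, hinj, ?_, ?_⟩
    · have hsub : Finset.univ.image (Sum.elim (blow (Sum.elim fv fe) (n + 1) ∘ vpos m n r0)
          (blow (Sum.elim fv fe) (n + 1) ∘ epos m n r0)) =
          Finset.Icc 1 (Fintype.card (Fin m ⊕ Fin m × Fin n) +
            Fintype.card (Fin m ⊕ Fin m × Fin n)) := by
        apply Finset.eq_of_subset_of_card_le
        · intro y hy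
          rw [key] at hy
          simp only [Finset.mem_image, Finset.mem_univ, true_and, Function.comp_apply] at hy
          obtain ⟨z, rfl⟩ := hy
          generalize Sum.elim (vpos m n r0) (epos m n r0) z = w
          obtain ⟨x, c⟩ := w
          obtain ⟨hx1, hx2⟩ := hb x
          have hc := c.2
          simp only [Finset.mem_Icc, blow, Fintype.card_sum, Fintype.card_prod, Fintype.card_fin]
          refine ⟨by omega, ?_⟩
          obtain ⟨t, ht⟩ : ∃ t, Sum.elim fv fe x = t + 1 := ⟨_ - 1, (Nat.sub_add_cancel hx1).symm⟩
          rw [ht] at hx2 ⊢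
          simp only [Nat.add_sub_cancel]
          nlinarith [Nat.mul_le_mul_left (n + 1) hx2]
        · rw [Finset.card_image_of_injective _ hinj]
          simp
      have := congrArg (fun s : Finset ℕ => (s : Set ℕ)) hsub
      simpa only [Finset.coe_image, Finset.coe_univ, Set.image_univ, Finset.coe_Icc] using this
    · have hv := valence_ge hm h
      have main : ∀ i : Fin m, ∀ c : Fin (n + 1),
          blow (Sum.elim fv fe) (n + 1) (Sum.inl i, r0) +
          blow (Sum.elim fv fe) (n + 1) (Sum.inr i, c.rev) +
          blow (Sum.elim fv fe) (n + 1) (Sum.inl (cycNext m i), c) =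
          (n + 1) * (v - 2) + (r0.val + 1) + 1 := by
        intro i c
        have e : fv i + fe i + fv (cycNext m i) = v := h.2.2 i
        have h1 := (hb (Sum.inl i)).1
        have h2 := (hb (Sum.inl (cycNext m i))).1
        have h3 := (hb (Sum.inr i)).1
        have hc := c.2
        simp only [blow, Sum.elim_inl, Sum.elim_inr, Fin.val_rev] at h1 h2 h3 ⊢
        obtain ⟨a, ha⟩ := Nat.exists_eq_add_of_le' h1
        obtain ⟨b, hb'⟩ := Nat.exists_eq_add_of_le' h2
        obtain ⟨d, hd⟩ := Nat.exists_eq_add_of_le' h3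
        have e2 : v - 2 = a + d + b + 1 := by omega
        rw [e2, ha, hb', hd]
        simp only [Nat.add_sub_cancel, Nat.mul_add]
        omega
      rintro (i | ⟨i, j⟩)
      · exact main i r0
      · exact main i (r0.succAbove j)
  · rintro v v' ⟨fv, fe, h⟩ _ hlt r r' hr1 hr2 hr1' hr2'
    have hv := valence_ge hm h
    have : (n + 1) * (v - 2 + 1) ≤ (n + 1) * (v' - 2) := Nat.mul_le_mul_left _ (by omega)
    rw [Nat.mul_add] at this
    omega
end

section
/- Let m = p_1^{α_1} p_2^{α_2} ⋯ p_k^{α_k} be the prime factorization of an odd number m ≥ 3, where p_1,…,p_k are distinct odd primes. Then for every positive integer n the crown C_m ⊙ K̄_n admits edge-magic labelings realizing at least (1 + α_1 + ⋯ + α_k)(n+1) mutually different valences. -/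
/-! ### Helper material -/

/-- Position-to-label map of the super edge-magic labeling of an odd cycle. -/
def cySig (a t : ℕ) : ℕ := if t % 2 = 0 then t / 2 else t / 2 + a + 1

theorem cySig_lt (a t : ℕ) (h : t < 2 * a + 1) : cySig a t < 2 * a + 1 := by
  unfold cySig; split_ifs <;> omega

theorem cySig_inj (a t t' : ℕ) (h : t < 2 * a + 1) (h' : t' < 2 * a + 1)
    (e : cySig a t = cySig a t') : t = t' := by
  unfold cySig at e; split_ifs at e <;> omega

/-- cyclic successor -/
def cyNext (r t : ℕ) : ℕ := if t + 1 = r then 0 else t + 1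

theorem cyNext_lt (r t : ℕ) (h : t < r) : cyNext r t < r := by
  unfold cyNext; split_ifs <;> omega

theorem cyNext_inj (r t t' : ℕ) (e : cyNext r t = cyNext r t') : t = t' := by
  unfold cyNext at e; split_ifs at e <;> omega

theorem cySig_add (a t : ℕ) (h : t < 2 * a + 1) :
    cySig a t + cySig a (cyNext (2 * a + 1) t) = a + cyNext (2 * a + 1) t := by
  unfold cySig cyNext; split_ifs <;> omega

def cyTau (r d i : ℕ) : ℕ := if (i % d) % 2 = 0 then i / d else cyNext r (i / d)

theorem cy_step (r d i : ℕ) (hd : 0 < d) (hi : i < d * r) :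
    ((i % d + 1 < d ∧ ((i + 1) % (d * r)) / d = i / d ∧ ((i + 1) % (d * r)) % d = i % d + 1) ∨
     (i % d + 1 = d ∧ ((i + 1) % (d * r)) / d = cyNext r (i / d) ∧
       ((i + 1) % (d * r)) % d = 0)) := by
  have h1 := Nat.div_add_mod i d
  have h2 := Nat.mod_lt i hd
  have h3 : i / d < r := Nat.div_lt_of_lt_mul hi
  set w := i / d with hw
  set u := i % d with hu
  have h4 : d * (w + 1) ≤ d * r := Nat.mul_le_mul_left d h3
  by_cases hc : u + 1 < d
  · left
    have h5 : i + 1 < d * r := by rw [Nat.mul_add] at h4; omega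
    rw [Nat.mod_eq_of_lt h5]
    have h6 : i + 1 = (u + 1) + d * w := by omega
    refine ⟨hc, ?_, ?_⟩
    · rw [h6, Nat.add_mul_div_left _ _ hd, Nat.div_eq_of_lt hc, Nat.zero_add]
    · rw [h6, Nat.add_mul_mod_self_left, Nat.mod_eq_of_lt hc]
  · right
    have hc' : u + 1 = d := by omega
    have h6 : i + 1 = d * (w + 1) := by rw [Nat.mul_add]; omega
    refine ⟨hc', ?_⟩
    unfold cyNext
    split_ifs with h
    · rw [h6, h, Nat.mod_self]; simp
    · have h7 : w + 1 < r := by omega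
      have h8 : d * (w + 1) < d * r := Nat.mul_lt_mul_of_pos_left h7 hd
      rw [h6, Nat.mod_eq_of_lt h8, Nat.mul_div_cancel_left _ hd, Nat.mul_mod_right]
      simp

/-- The two digit functions on the cycle. -/
theorem cy_digits (a b m : ℕ) (hm : m = (2 * b + 1) * (2 * a + 1)) :
    ∃ X Y : ℕ → ℕ,
      (∀ i < m, X i < 2 * a + 1 ∧ Y i < 2 * b + 1) ∧
      (∀ i < m, ∀ j < m, X i = X j → Y i = Y j → i = j) ∧
      (∀ i < m, a ≤ X i + X ((i + 1) % m) ∧ X i + X ((i + 1) % m) ≤ 3 * a ∧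
        b ≤ Y i + Y ((i + 1) % m) ∧ Y i + Y ((i + 1) % m) ≤ 3 * b) ∧
      (∀ i < m, ∀ j < m, X i + X ((i + 1) % m) = X j + X ((j + 1) % m) →
        Y i + Y ((i + 1) % m) = Y j + Y ((j + 1) % m) → i = j) := by
  subst hm
  set d := 2 * b + 1 with hd
  set r := 2 * a + 1 with hr
  have hd0 : 0 < d := by omega
  have hw : ∀ i < d * r, i / d < r := fun i hi => Nat.div_lt_of_lt_mul hi
  have hu : ∀ i, i % d < d := fun i => Nat.mod_lt i hd0
  have htau : ∀ i < d * r, cyTau r d i < r := by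
    intro i hi
    unfold cyTau
    split_ifs
    · exact hw i hi
    · exact cyNext_lt _ _ (hw i hi)
  have hfin : ∀ i j, i / d = j / d → i % d = j % d → i = j := by
    intro i j h1 h2
    rw [← Nat.div_add_mod i d, ← Nat.div_add_mod j d, h1, h2]
  have hsY : ∀ i < d * r, cySig b (i % d) + cySig b (((i + 1) % (d * r)) % d)
      = b + cyNext d (i % d) := by
    intro i hi
    rw [hd, ← cySig_add b (i % d) (hu i), ← hd]
    congr 2
    unfold cyNext
    rcases cy_step r d i hd0 hi with ⟨h1, _, h3⟩ | ⟨h1, _, h3⟩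
    · rw [h3, if_neg (by omega)]
    · rw [h3, if_pos h1]
  have hsX : ∀ i < d * r, cySig a (cyTau r d i) + cySig a (cyTau r d ((i + 1) % (d * r)))
      = a + cyNext r (i / d) := by
    intro i hi
    have key := cySig_add a (i / d) (hw i hi)
    rw [← hr] at key
    unfold cyTau
    rcases cy_step r d i hd0 hi with ⟨h1, h2, h3⟩ | ⟨h1, h2, h3⟩
    · rw [h2, h3]
      by_cases hp : (i % d) % 2 = 0
      · rw [if_pos hp, if_neg (by omega), key]
      · rw [if_neg hp, if_pos (by omega), add_comm, key]
    · rw [h2, h3, if_pos (by omega), if_pos (by omega), key]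
  refine ⟨fun i => cySig a (cyTau r d i), fun i => cySig b (i % d), ?_, ?_, ?_, ?_⟩
  · intro i hi
    exact ⟨cySig_lt _ _ (htau i hi), cySig_lt _ _ (hu i)⟩
  · intro i hi j hj hX hY
    have h1 := cySig_inj _ _ _ (hu i) (hu j) hY
    have h2 := cySig_inj _ _ _ (htau i hi) (htau j hj) hX
    apply hfin i j _ h1
    unfold cyTau at h2
    rw [h1] at h2
    split_ifs at h2
    · exact h2
    · exact cyNext_inj _ _ _ h2
  · intro i hi
    have h1 := hsX i hi
    have h2 := hsY i hi
    have h3 := cyNext_lt _ _ (hw i hi)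
    have h4 := cyNext_lt _ _ (hu i)
    dsimp only
    omega
  · intro i hi j hj hX hY
    dsimp only at hX hY
    rw [hsX i hi, hsX j hj] at hX
    rw [hsY i hi, hsY j hj] at hY
    exact hfin i j (cyNext_inj r _ _ (by omega)) (cyNext_inj d _ _ (by omega))

/-- Mixed radix code. -/
def cyCode (r d x e y z : ℕ) : ℕ := x + r * (e + 2 * (y + d * z))

theorem cy_digit_unique {r x q x' q' : ℕ} (h : x < r) (h' : x' < r)
    (e : x + r * q = x' + r * q') : x = x' ∧ q = q' := by
  have hx : x = x' := by
    have := congrArg (· % r) e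
    simpa [Nat.add_mul_mod_self_left, Nat.mod_eq_of_lt h, Nat.mod_eq_of_lt h'] using this
  subst hx
  exact ⟨rfl, Nat.eq_of_mul_eq_mul_left (by omega : 0 < r) (by omega)⟩

theorem cyCode_inj {r d x e y z x' e' y' z' : ℕ} (hx : x < r) (hx' : x' < r)
    (he : e < 2) (he' : e' < 2) (hy : y < d) (hy' : y' < d)
    (h : cyCode r d x e y z = cyCode r d x' e' y' z') :
    x = x' ∧ e = e' ∧ y = y' ∧ z = z' := by
  obtain ⟨h1, h2⟩ := cy_digit_unique hx hx' h
  obtain ⟨h3, h4⟩ := cy_digit_unique he he' h2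
  obtain ⟨h5, h6⟩ := cy_digit_unique hy hy' h4
  exact ⟨h1, h3, h5, h6⟩

theorem cyCode_lt {r d x e y z N : ℕ} (hx : x < r) (he : e < 2) (hy : y < d) (hz : z < N) :
    cyCode r d x e y z < r * (2 * (d * N)) := by
  have aux : ∀ {A B p q : ℕ}, p < A → q < B → p + A * q < A * B := by
    intro A B p q hp hq
    calc p + A * q < A + A * q := by omega
      _ = A * (q + 1) := by ring
      _ ≤ A * B := Nat.mul_le_mul_left A hq
  exact aux hx (aux he (aux hy hz))

/-- Enumeration of the digits different from `c`. -/
def cySkip (c j : ℕ) : ℕ := if j < c then j else j + 1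

theorem cySkip_ne (c j : ℕ) : cySkip c j ≠ c := by unfold cySkip; split_ifs <;> omega

theorem cySkip_inj {c j j' : ℕ} (h : cySkip c j = cySkip c j') : j = j' := by
  unfold cySkip at h; split_ifs at h <;> omega

theorem cySkip_lt {c j n : ℕ} (h : j < n) : cySkip c j < n + 1 := by
  unfold cySkip; split_ifs <;> omega

theorem edgeMagic_of_inj {V E : Type} [Fintype V] [Fintype E] (ends : E → V × V)
    (fv : V → ℕ) (fe : E → ℕ) (k : ℕ) (hinj : Function.Injective (Sum.elim fv fe))
    (hb : ∀ t, Sum.elim fv fe t ∈ Set.Icc 1 (Fintype.card V + Fintype.card E))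
    (hk : ∀ e : E, fv (ends e).1 + fe e + fv (ends e).2 = k) :
    IsEdgeMagic ends fv fe k := by
  classical
  refine ⟨hinj, ?_, hk⟩
  have h : Finset.univ.image (Sum.elim fv fe)
      = Finset.Icc 1 (Fintype.card V + Fintype.card E) := by
    apply Finset.eq_of_subset_of_card_le
    · intro t ht
      obtain ⟨s, -, rfl⟩ := Finset.mem_image.1 ht
      exact Finset.mem_Icc.2 (hb s)
    · rw [Finset.card_image_of_injective _ hinj]
      simp
  have h2 := congrArg (fun s : Finset ℕ => (s : Set ℕ)) h
  simpa using h2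

theorem crown_valence (a b m n c : ℕ) (hm : m = (2 * b + 1) * (2 * a + 1)) (hc : c < n + 1) :
    ∃ fv fe, IsEdgeMagic (crownEnds m n) fv fe (3 * m + 2 * m * (n + c) + 1 - a) := by
  obtain ⟨X, Y, hlt, hinj, hs, hsinj⟩ := cy_digits a b m hm
  have hnext : ∀ i < m, (i + 1) % m < m := fun i hi => Nat.mod_lt _ (by omega)
  have hnextinj : ∀ i < m, ∀ j < m, (i + 1) % m = (j + 1) % m → i = j := by
    intro i hi j hj h
    have e : ∀ i < m, (i + 1) % m = cyNext m i := by
      intro i hi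
      unfold cyNext
      split_ifs with h
      · rw [h, Nat.mod_self]
      · exact Nat.mod_eq_of_lt (by omega)
    rw [e i hi, e j hj] at h
    exact cyNext_inj _ _ _ h
  -- vertex and edge codes
  let vc : ℕ → ℕ → ℕ := fun i z => cyCode (2 * a + 1) (2 * b + 1) (X i) 0 (Y i) z + 1
  let ec : ℕ → ℕ → ℕ := fun i z => cyCode (2 * a + 1) (2 * b + 1)
    (3 * a - (X i + X ((i + 1) % m))) 1 (3 * b - (Y i + Y ((i + 1) % m))) (n - z) + 1
  have hN : (2 * a + 1) * (2 * ((2 * b + 1) * (n + 1))) = 2 * (m * (n + 1)) := by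
    rw [hm]; ring
  have hvb : ∀ i < m, ∀ z < n + 1, 1 ≤ vc i z ∧ vc i z ≤ 2 * (m * (n + 1)) := by
    intro i hi z hz
    have := cyCode_lt (hlt i hi).1 (by norm_num : 0 < 2) (hlt i hi).2 hz
    rw [hN] at this
    exact ⟨by simp [vc], this⟩
  have hed : ∀ i < m, 3 * a - (X i + X ((i + 1) % m)) < 2 * a + 1 ∧
      3 * b - (Y i + Y ((i + 1) % m)) < 2 * b + 1 := by
    intro i hi
    have := hs i hi
    omega
  have heb : ∀ i < m, ∀ z < n + 1, 1 ≤ ec i z ∧ ec i z ≤ 2 * (m * (n + 1)) := by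
    intro i hi z hz
    have := cyCode_lt (hed i hi).1 (by norm_num : 1 < 2) (hed i hi).2 (by omega : n - z < n + 1)
    rw [hN] at this
    exact ⟨by simp [ec], this⟩
  have hvinj : ∀ i < m, ∀ j < m, ∀ z z', vc i z = vc j z' → i = j ∧ z = z' := by
    intro i hi j hj z z' h
    obtain ⟨h1, -, h2, h3⟩ := cyCode_inj (hlt i hi).1 (hlt j hj).1 (by norm_num) (by norm_num)
      (hlt i hi).2 (hlt j hj).2 (Nat.succ_injective h)
    exact ⟨hinj i hi j hj h1 h2, h3⟩
  have heinj : ∀ i < m, ∀ j < m, ∀ z < n + 1, ∀ z' < n + 1, ec i z = ec j z' →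
      i = j ∧ z = z' := by
    intro i hi j hj z hz z' hz' h
    obtain ⟨h1, -, h2, h3⟩ := cyCode_inj (hed i hi).1 (hed j hj).1 (by norm_num) (by norm_num)
      (hed i hi).2 (hed j hj).2 (Nat.succ_injective h)
    have q1 := hs i hi
    have q2 := hs j hj
    exact ⟨hsinj i hi j hj (by omega) (by omega), by omega⟩
  have hve : ∀ i < m, ∀ j < m, ∀ z z', vc i z ≠ ec j z' := by
    intro i hi j hj z z' h
    obtain ⟨-, h2, -⟩ := cyCode_inj (hlt i hi).1 (hed j hj).1 (by norm_num) (by norm_num)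
      (hlt i hi).2 (hed j hj).2 (Nat.succ_injective h)
    omega
  have hval : ∀ i < m, ∀ z < n + 1, vc i c + ec i z + vc ((i + 1) % m) z
      = 3 * m + 2 * m * (n + c) + 1 - a := by
    intro i hi z hz
    obtain ⟨h1, h2, h3, h4⟩ := hs i hi
    simp only [vc, ec, cyCode]
    generalize X i = x at *
    generalize X ((i + 1) % m) = x' at *
    generalize Y i = y at *
    generalize Y ((i + 1) % m) = y' at *
    obtain ⟨p, hp⟩ := Nat.exists_eq_add_of_le h2
    obtain ⟨q, hq⟩ := Nat.exists_eq_add_of_le h4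
    obtain ⟨w, hw⟩ := Nat.exists_eq_add_of_le (by omega : z ≤ n)
    rw [show 3 * a - (x + x') = p by omega, show 3 * b - (y + y') = q by omega,
      show n - z = w by omega]
    apply Nat.eq_sub_of_add_eq
    subst hm
    zify at hp hq hw ⊢
    have hx : (x' : ℤ) = 3 * a - x - p := by linarith
    have hy : (y' : ℤ) = 3 * b - y - q := by linarith
    rw [hx, hy, hw]
    ring
  let fv : Fin m ⊕ Fin m × Fin n → ℕ := Sum.elim (fun i => vc i.val c)
    (fun p => vc ((p.1.val + 1) % m) (cySkip c p.2.val))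
  let fe : Fin m ⊕ Fin m × Fin n → ℕ := Sum.elim (fun i => ec i.val c)
    (fun p => ec p.1.val (cySkip c p.2.val))
  refine ⟨fv, fe, edgeMagic_of_inj _ _ _ _ ?_ ?_ ?_⟩
  · have hfv : Function.Injective fv := by
      rintro (i | ⟨i, j⟩) (i' | ⟨i', j'⟩) h
      · have := hvinj _ i.2 _ i'.2 _ _ h
        rw [Fin.ext this.1]
      · exact absurd (hvinj _ i.2 _ (hnext _ i'.2) _ _ h).2.symm (cySkip_ne _ _)
      · exact absurd (hvinj _ (hnext _ i.2) _ i'.2 _ _ h).2 (cySkip_ne _ _)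
      · have := hvinj _ (hnext _ i.2) _ (hnext _ i'.2) _ _ h
        rw [Fin.ext (hnextinj _ i.2 _ i'.2 this.1), show j = j' from Fin.ext (cySkip_inj this.2)]
    have hfe : Function.Injective fe := by
      rintro (i | ⟨i, j⟩) (i' | ⟨i', j'⟩) h
      · have := heinj _ i.2 _ i'.2 _ hc _ hc h
        rw [Fin.ext this.1]
      · exact absurd (heinj _ i.2 _ i'.2 _ hc _ (cySkip_lt j'.2) h).2.symm (cySkip_ne _ _)
      · exact absurd (heinj _ i.2 _ i'.2 _ (cySkip_lt j.2) _ hc h).2 (cySkip_ne _ _)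
      · have := heinj _ i.2 _ i'.2 _ (cySkip_lt j.2) _ (cySkip_lt j'.2) h
        rw [Fin.ext this.1, show j = j' from Fin.ext (cySkip_inj this.2)]
    refine hfv.sumElim hfe ?_
    rintro (i | ⟨i, j⟩) (i' | ⟨i', j'⟩)
    · exact hve _ i.2 _ i'.2 _ _
    · exact hve _ i.2 _ i'.2 _ _
    · exact hve _ (hnext _ i.2) _ i'.2 _ _
    · exact hve _ (hnext _ i.2) _ i'.2 _ _
  · have hcard : Fintype.card (Fin m ⊕ Fin m × Fin n) + Fintype.card (Fin m ⊕ Fin m × Fin n)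
        = 2 * (m * (n + 1)) := by
      simp; ring
    rw [hcard]
    rintro ((i | ⟨i, j⟩) | (i | ⟨i, j⟩))
    · exact hvb _ i.2 _ hc
    · exact hvb _ (hnext _ i.2) _ (cySkip_lt j.2)
    · exact heb _ i.2 _ hc
    · exact heb _ i.2 _ (cySkip_lt j.2)
  · rintro (i | ⟨i, j⟩)
    · exact hval _ i.2 _ hc
    · exact hval _ i.2 _ (cySkip_lt j.2)

theorem one_add_sum_le_prod_cy (s : Finset ℕ) (f : ℕ → ℕ) :
    1 + ∑ i ∈ s, f i ≤ ∏ i ∈ s, (f i + 1) := by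
  classical
  induction s using Finset.induction_on with
  | empty => simp
  | insert x s hx ih =>
    rw [Finset.sum_insert hx, Finset.prod_insert hx]
    nlinarith [Nat.zero_le (f x * ∑ i ∈ s, f i), Nat.mul_le_mul_left (f x) ih]

/-- for odd m ≥ 3 with Ω(m) = α₁+⋯+α_k prime factors counted
with multiplicity, the crown C_m ⊙ K̄_n admits at least (1 + Ω(m))(n+1)
mutually different edge-magic valences. -/
theorem crown_odd_valences_lowerBound (m n : ℕ) (hm : 3 ≤ m) (hodd : Odd m)
    (hn : 1 ≤ n) :
    ∃ S : Finset ℕ,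
      (1 + m.factorization.sum fun _ e => e) * (n + 1) ≤ S.card ∧
      ∀ k ∈ S, ∃ fv fe, IsEdgeMagic (crownEnds m n) fv fe k := by
  classical
  have hm0 : m ≠ 0 := by omega
  have hdiv : ∀ r ∈ m.divisors, Odd r ∧ r ≤ m := by
    intro r hr
    have h := Nat.dvd_of_mem_divisors hr
    exact ⟨hodd.of_dvd_nat h, Nat.le_of_dvd (by omega) h⟩
  refine ⟨(m.divisors ×ˢ Finset.range (n + 1)).image
    (fun p => 3 * m + 2 * m * (n + p.2) + 1 - p.1 / 2), ?_, ?_⟩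
  · rw [Finset.card_image_of_injOn, Finset.card_product, Finset.card_range]
    · apply Nat.mul_le_mul_right
      rw [Nat.card_divisors hm0]
      exact one_add_sum_le_prod_cy _ _
    · rintro ⟨r, c⟩ h ⟨r', c'⟩ h' e
      simp only [Finset.coe_product, Set.mem_prod, Finset.mem_coe] at h h'
      obtain ⟨⟨a, ha⟩, hr⟩ := hdiv r h.1
      obtain ⟨⟨a', ha'⟩, hr'⟩ := hdiv r' h'.1
      dsimp only at e
      have hcc : c = c' := by
        rcases lt_trichotomy c c' with hl | hl | hl
        · have : 2 * m * (n + c + 1) ≤ 2 * m * (n + c') := Nat.mul_le_mul_left _ (by omega)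
          rw [Nat.mul_add _ (n + c) 1] at this
          omega
        · exact hl
        · have : 2 * m * (n + c' + 1) ≤ 2 * m * (n + c) := Nat.mul_le_mul_left _ (by omega)
          rw [Nat.mul_add _ (n + c') 1] at this
          omega
      subst hcc
      have : r = r' := by omega
      rw [this]
  · intro k hk
    obtain ⟨⟨r, c⟩, hp, rfl⟩ := Finset.mem_image.1 hk
    rw [Finset.mem_product] at hp
    obtain ⟨d, hd⟩ := Nat.dvd_of_mem_divisors hp.1
    obtain ⟨⟨a, ha⟩, -⟩ := hdiv r hp.1
    obtain ⟨b, hb⟩ : Odd d := hodd.of_dvd_nat ⟨r, by rw [hd, mul_comm]⟩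
    have h2 : r / 2 = a := by omega
    dsimp only
    rw [h2]
    exact crown_valence a b m n c (by rw [hd, ha, hb, mul_comm]) (Finset.mem_range.1 hp.2)
end

section
/- Let m = p^k where p > 2 is a prime number and k is a positive integer, and let n be a positive integer. Then the crown C_m ⊙ K̄_n is perfect super edge-magic: for every integer j with 2mn + (5m+3)/2 ≤ j ≤ 3mn + (5m+3)/2 there exists a super edge-magic labeling of C_m ⊙ K̄_n with valence j. -/
/-- `f` permutes `[0, 2h+1)`, does not cross the cut at `a`, and its displacements are
pairwise distinct and lie in `[-h, h]`. -/
def CutSol (h a : ℤ) : Prop :=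
  ∃ f : ℤ → ℤ,
    (∀ x, 0 ≤ x → x < 2 * h + 1 → 0 ≤ f x ∧ f x < 2 * h + 1 ∧ (x < a ↔ f x < a) ∧
      -h ≤ f x - x ∧ f x - x ≤ h) ∧
    (∀ x y, 0 ≤ x → x < 2 * h + 1 → 0 ≤ y → y < 2 * h + 1 → f x = f y → x = y) ∧
    (∀ x y, 0 ≤ x → x < 2 * h + 1 → 0 ≤ y → y < 2 * h + 1 → f x - x = f y - y → x = y)

/-- Langford-type permutation of `[0, 2g)` whose displacements are `±(s+1), …, ±(s+g)`. -/
def LangSol (g s : ℤ) : Prop :=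
  ∃ f : ℤ → ℤ,
    (∀ x, 0 ≤ x → x < 2 * g → 0 ≤ f x ∧ f x < 2 * g ∧
      ((s + 1 ≤ f x - x ∧ f x - x ≤ s + g) ∨ (s + 1 ≤ x - f x ∧ x - f x ≤ s + g))) ∧
    (∀ x y, 0 ≤ x → x < 2 * g → 0 ≤ y → y < 2 * g → f x = f y → x = y) ∧
    (∀ x y, 0 ≤ x → x < 2 * g → 0 ≤ y → y < 2 * g → f x - x = f y - y → x = y)

theorem lang_one (s : ℤ) (_hs : 0 ≤ s) : LangSol (2 * s + 1) s := by
  refine ⟨fun x => if x ≤ s then 2 * s + 1 + 2 * x else if x < 2 * s + 1 then 2 * x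
    else if x ≤ 3 * s + 1 then 2 * (x - (2 * s + 1)) else 2 * (x - (2 * s + 1)) - (2 * s + 1),
    ?_, ?_, ?_⟩
  · intro x _ _; dsimp only; split_ifs <;> omega
  · intro x y _ _ _ _; dsimp only; split_ifs <;> omega
  · intro x y _ _ _ _; dsimp only; split_ifs <;> omega

theorem lang_two (u : ℤ) (hu : 1 ≤ u) : LangSol (2 * u) (u - 1) := by
  refine ⟨fun x => if x < u then 3 * u - 2 - x else if x < 2 * u then 5 * u - 1 - x
    else if x < 3 * u then 3 * u - 1 - x else if x < 4 * u - 1 then 5 * u - 2 - x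
    else 3 * u - 1, ?_, ?_, ?_⟩
  · intro x _ _; dsimp only; split_ifs <;> omega
  · intro x y _ _ _ _; dsimp only; split_ifs <;> omega
  · intro x y _ _ _ _; dsimp only; split_ifs <;> omega

theorem lang_three (u : ℤ) (hu : 1 ≤ u) : LangSol (2 * u + 1) (u - 1) := by
  refine ⟨fun x => if x < u then 3 * u - 1 - x else if x = u then 0
    else if x < 2 * u + 2 then 5 * u + 2 - x
    else if x < 3 * u + 2 then 1 + 2 * (x - (2 * u + 2))
    else if x < 4 * u + 1 then 1 + 2 * (x - (2 * u + 2)) - (2 * u - 1)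
    else 3 * u, ?_, ?_, ?_⟩
  · intro x _ _; dsimp only; split_ifs <;> omega
  · intro x y _ _ _ _; dsimp only; split_ifs <;> omega
  · intro x y _ _ _ _; dsimp only; split_ifs <;> omega

set_option maxHeartbeats 2000000 in
theorem cut_special (s : ℤ) (hs : 1 ≤ s) : CutSol (3 * s) (2 * s) := by
  refine ⟨fun x => if x < s then 2 * x + 1 else if x < 2 * s then 2 * (x - s)
    else if x < 3 * s then 2 * s + (3 * s - 1 - (x - 2 * s))
    else if x < 4 * s then 2 * s + (5 * s - (x - 2 * s))
    else if x < 5 * s then 2 * s + (3 * s - 1 - (x - 2 * s))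
    else if x = 5 * s then x
    else 2 * s + (5 * s - (x - 2 * s)), ?_, ?_, ?_⟩
  · intro x _ _; dsimp only; split_ifs <;> omega
  · intro x y _ _ _ _; dsimp only; split_ifs <;> omega
  · intro x y _ _ _ _; dsimp only; split_ifs <;> omega

theorem cut_extend (s g a : ℤ) (_hs : 0 ≤ s) (_hg : 0 ≤ g) (ha : a ≤ 2 * s + 1)
    (H : CutSol s a) (G : LangSol g s) : CutSol (s + g) a := by
  obtain ⟨f, f1, f2, f3⟩ := H
  obtain ⟨e, e1, e2, e3⟩ := G
  refine ⟨fun x => if x < 2 * s + 1 then f x else 2 * s + 1 + e (x - (2 * s + 1)), ?_, ?_, ?_⟩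
  · intro x hx hx'; dsimp only
    have A := f1 x hx
    have B := e1 (x - (2 * s + 1))
    split_ifs <;> omega
  · intro x y hx hx' hy hy'; dsimp only
    have A := f1 x hx
    have B := e1 (x - (2 * s + 1))
    have A' := f1 y hy
    have B' := e1 (y - (2 * s + 1))
    have C := f2 x y hx
    have D := e2 (x - (2 * s + 1)) (y - (2 * s + 1))
    split_ifs <;> omega
  · intro x y hx hx' hy hy'; dsimp only
    have A := f1 x hx
    have B := e1 (x - (2 * s + 1))
    have A' := f1 y hy
    have B' := e1 (y - (2 * s + 1))
    have C := f3 x y hx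
    have D := e3 (x - (2 * s + 1)) (y - (2 * s + 1))
    split_ifs <;> omega

theorem cut_reflect (h a : ℤ) (H : CutSol h a) : CutSol h (2 * h + 1 - a) := by
  obtain ⟨f, f1, f2, f3⟩ := H
  refine ⟨fun x => 2 * h - f (2 * h - x), ?_, ?_, ?_⟩
  · intro x hx hx'; dsimp only
    have A := f1 (2 * h - x)
    omega
  · intro x y hx hx' hy hy'; dsimp only
    have A := f2 (2 * h - x) (2 * h - y)
    omega
  · intro x y hx hx' hy hy'; dsimp only
    have A := f3 (2 * h - x) (2 * h - y)
    omega

set_option maxHeartbeats 2000000 in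
/-- The case of a large small block: `d = h - a`, swap two outer blocks of length `2d+1`. -/
theorem cut_large (h a d : ℤ) (hd : 0 ≤ d) (had : a = h - d) (ha : 2 * d + 1 ≤ a)
    (H : CutSol (h - (2 * d + 1)) a) : CutSol h a := by
  obtain ⟨f, f1, f2, f3⟩ := H
  obtain ⟨g, hg⟩ : ∃ g : ℤ → ℤ, g = fun x => if x < a then (f x)
    else if x ≤ a + d then 2 * h + 1 - (2 * d + 1) + 2 * (x - a)
    else if x < a + (2 * d + 1) then 2 * h + 1 - 2 * (2 * d + 1) + 2 * (x - a)
    else if x < 2 * h + 1 - (2 * d + 1) then f (x - (2 * d + 1)) + (2 * d + 1)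
    else if x < 2 * h + 1 - d then a + 2 * (x - (2 * h + 1 - (2 * d + 1)))
    else a + 2 * (x - (2 * h + 1 - (2 * d + 1))) - (2 * d + 1) := ⟨_, rfl⟩
  -- every point is either inner (comes from `f`) or outer (in one of the two swapped blocks)
  have spec : ∀ x, 0 ≤ x → x < 2 * h + 1 →
      (∃ z, 0 ≤ z ∧ z < 2 * (h - (2 * d + 1)) + 1 ∧ 0 ≤ f z ∧
        f z < 2 * (h - (2 * d + 1)) + 1 ∧ -(h - (2 * d + 1)) ≤ f z - z ∧
        f z - z ≤ h - (2 * d + 1) ∧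
        ((z < a ∧ f z < a ∧ x = z ∧ g x = f z) ∨
          (a ≤ z ∧ a ≤ f z ∧ x = z + (2 * d + 1) ∧ g x = f z + (2 * d + 1)))) ∨
      (a ≤ x ∧ x ≤ a + d ∧ g x = 2 * h + 1 - (2 * d + 1) + 2 * (x - a)) ∨
      (a + d < x ∧ x < a + (2 * d + 1) ∧ g x = 2 * h + 1 - 2 * (2 * d + 1) + 2 * (x - a)) ∨
      (2 * h + 1 - (2 * d + 1) ≤ x ∧ x < 2 * h + 1 - d ∧
        g x = a + 2 * (x - (2 * h + 1 - (2 * d + 1)))) ∨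
      (2 * h + 1 - d ≤ x ∧ g x = a + 2 * (x - (2 * h + 1 - (2 * d + 1))) - (2 * d + 1)) := by
    intro x hx hx'
    rw [hg]
    dsimp only
    split_ifs with c1 c2 c3 c4 c5
    · have A := f1 x hx (by omega)
      exact Or.inl ⟨x, by omega⟩
    · omega
    · omega
    · have A := f1 (x - (2 * d + 1)) (by omega) (by omega)
      exact Or.inl ⟨x - (2 * d + 1), by omega⟩
    · omega
    · omega
  clear hg
  refine ⟨g, ?_, ?_, ?_⟩
  · intro x hx hx'
    rcases spec x hx hx' with ⟨z, hz⟩ | hz | hz | hz | hz <;> omega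
  · intro x y hx hx' hy hy'
    rcases spec x hx hx' with ⟨z, hz⟩ | hz | hz | hz | hz <;>
    rcases spec y hy hy' with ⟨w, hw⟩ | hw | hw | hw | hw
    · have C := f2 z w hz.1 hz.2.1 hw.1 hw.2.1
      omega
    all_goals omega
  · intro x y hx hx' hy hy'
    rcases spec x hx hx' with ⟨z, hz⟩ | hz | hz | hz | hz <;>
    rcases spec y hy hy' with ⟨w, hw⟩ | hw | hw | hw | hw
    · have C := f3 z w hz.1 hz.2.1 hw.1 hw.2.1
      omega
    all_goals omega

theorem cut_exists : ∀ (N : ℕ) (h a : ℤ), 0 ≤ h → h < N → 0 ≤ a → a ≤ 2 * h + 1 →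
    CutSol h a := by
  intro N
  induction N with
  | zero => intro h a h0 h1; push_cast at h1; omega
  | succ N ih =>
    have key : ∀ (h a : ℤ), 0 ≤ h → h < (N : ℤ) + 1 → 0 ≤ a → a ≤ h → CutSol h a := by
      intro h a h0 h1 a0 a1
      by_cases hh : h = 0
      · subst hh
        exact ⟨fun x => x, by intro x; dsimp only; omega, by intro x y; dsimp only; omega, by intro x y; dsimp only; omega⟩
      by_cases hl : 2 * (h - a) + 1 ≤ a
      · exact cut_large h a (h - a) (by omega) (by omega) hl
          (ih _ _ (by omega) (by omega) (by omega) (by omega))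
      have h3 : h % 3 = 0 ∨ h % 3 = 1 ∨ h % 3 = 2 := by omega
      rcases h3 with h3 | h3 | h3
      · obtain ⟨u, rfl⟩ : ∃ u, h = 3 * u := ⟨h / 3, by omega⟩
        by_cases ha : a = 2 * u
        · subst ha; exact cut_special u (by omega)
        · have := cut_extend (u - 1) (2 * u + 1) a (by omega) (by omega) (by omega)
            (ih _ _ (by omega) (by omega) (by omega) (by omega)) (lang_three u (by omega))
          rwa [show u - 1 + (2 * u + 1) = 3 * u by ring] at this
      · obtain ⟨s, rfl⟩ : ∃ u, h = 3 * u + 1 := ⟨h / 3, by omega⟩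
        have := cut_extend s (2 * s + 1) a (by omega) (by omega) (by omega)
            (ih _ _ (by omega) (by omega) (by omega) (by omega)) (lang_one s (by omega))
        rwa [show s + (2 * s + 1) = 3 * s + 1 by ring] at this
      · obtain ⟨u, rfl⟩ : ∃ u, h = 3 * u - 1 := ⟨h / 3 + 1, by omega⟩
        have := cut_extend (u - 1) (2 * u) a (by omega) (by omega) (by omega)
            (ih _ _ (by omega) (by omega) (by omega) (by omega)) (lang_two u (by omega))
        rwa [show u - 1 + (2 * u) = 3 * u - 1 by ring] at this
    intro h a h0 h1 a0 a1
    push_cast at h1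
    by_cases hah : a ≤ h
    · exact key h a h0 h1 a0 hah
    · have := cut_reflect h _ (key h (2 * h + 1 - a) h0 h1 (by omega) (by omega))
      rwa [show 2 * h + 1 - (2 * h + 1 - a) = a by ring] at this

/-- Displacement-indexed form over the naturals. -/
theorem cut_nat (h a : ℕ) (ha : a ≤ 2 * h + 1) : ∃ X Y : ℕ → ℕ,
    (∀ w, w < 2 * h + 1 → X w < 2 * h + 1 ∧ Y w < 2 * h + 1 ∧ Y w + h = X w + w ∧
      (X w < a ↔ Y w < a)) ∧
    (∀ w v, w < 2 * h + 1 → v < 2 * h + 1 → X w = X v → w = v) ∧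
    (∀ w v, w < 2 * h + 1 → v < 2 * h + 1 → Y w = Y v → w = v) := by
  obtain ⟨f, f1, f2, f3⟩ := cut_exists (h + 1) h a (by omega) (by push_cast; omega) (by omega)
    (by omega)
  have hsurj : ∀ w, w < 2 * h + 1 → ∃ x : ℕ, x < 2 * h + 1 ∧ f x - x = (w : ℤ) - h := by
    have hinj : Function.Injective (fun x : Fin (2 * h + 1) =>
        (⟨(f (x.val : ℤ) - x.val + h).toNat, by
          have := f1 x.val (by omega) (by have := x.2; omega)
          omega⟩ : Fin (2 * h + 1))) := by
      intro x y hxy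
      have hx := f1 x.val (by omega) (by have := x.2; omega)
      have hy := f1 y.val (by omega) (by have := y.2; omega)
      have h3 := f3 x.val y.val (by omega) (by have := x.2; omega) (by omega)
        (by have := y.2; omega)
      simp only [Fin.mk.injEq] at hxy
      apply Fin.ext
      omega
    have hs := Finite.surjective_of_injective hinj
    intro w hw
    obtain ⟨x, hx⟩ := hs ⟨w, hw⟩
    simp only [Fin.mk.injEq] at hx
    have hx1 := f1 x.val (by omega) (by have := x.2; omega)
    exact ⟨x.val, x.2, by omega⟩
  choose! X hX using hsurj
  refine ⟨X, fun w => (f (X w)).toNat, ?_, ?_, ?_⟩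
  · intro w hw
    have A := hX w hw
    have B := f1 (X w) (by omega) (by omega)
    dsimp only
    omega
  · intro w v hw hv hxy
    have A := hX w hw
    have B := hX v hv
    rw [hxy] at A
    omega
  · intro w v hw hv hxy
    have A := hX w hw
    have A' := hX v hv
    have B := f1 (X w) (by omega) (by omega)
    have B' := f1 (X v) (by omega) (by omega)
    have C := f2 (X w) (X v) (by omega) (by omega) (by omega) (by omega)
    dsimp only at hxy
    have : X w = X v := by omega
    rw [this] at A
    omega

theorem range_of_inj {V : Type} [Fintype V] (f : V → ℕ) (hf : Function.Injective f)
    (hr : ∀ v, 1 ≤ f v ∧ f v ≤ Fintype.card V) : Set.range f = Set.Icc 1 (Fintype.card V) := by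
  classical
  have h1 : Finset.univ.image f = Finset.Icc 1 (Fintype.card V) := by
    apply Finset.eq_of_subset_of_card_le
    · intro y hy
      simp only [Finset.mem_image, Finset.mem_univ, true_and] at hy
      obtain ⟨v, rfl⟩ := hy
      exact Finset.mem_Icc.2 (hr v)
    · rw [Finset.card_image_of_injective _ hf]; simp
  have h2 := congrArg (fun s : Finset ℕ => (s : Set ℕ)) h1
  simpa using h2

/-- Super edge-magic labelings from vertex labels whose edge sums are consecutive. -/
theorem sem_of_sums {V E : Type} [Fintype V] [Fintype E] (ends : E → V × V) (fv : V → ℕ)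
    (s : ℕ) (hcard : Fintype.card V = Fintype.card E) (hf : Function.Injective fv)
    (hr : ∀ v, 1 ≤ fv v ∧ fv v ≤ Fintype.card V)
    (hS : Function.Injective (fun e => fv (ends e).1 + fv (ends e).2))
    (hSr : ∀ e, s ≤ fv (ends e).1 + fv (ends e).2 ∧
      fv (ends e).1 + fv (ends e).2 < s + Fintype.card V) :
    ∃ fv fe, IsSuperEdgeMagic ends fv fe (s + 2 * Fintype.card V) := by
  refine ⟨fv, fun e => s + 2 * Fintype.card V - (fv (ends e).1 + fv (ends e).2),
    ⟨?_, ?_, ?_⟩, range_of_inj fv hf hr⟩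
  · have hinj : Function.Injective (Sum.elim fv
        (fun e => s + 2 * Fintype.card V - (fv (ends e).1 + fv (ends e).2))) := by
      rintro (v | e) (v' | e') h <;> simp only [Sum.elim_inl, Sum.elim_inr] at h
      · rw [hf h]
      · have := hr v; have := hSr e'; omega
      · have := hr v'; have := hSr e; omega
      · have A := hSr e
        have A' := hSr e'
        have : e = e' := hS (by dsimp only; omega)
        rw [this]
    exact hinj
  · rw [← Fintype.card_sum]
    apply range_of_inj
    · rintro (v | e) (v' | e') h <;> simp only [Sum.elim_inl, Sum.elim_inr] at h
      · rw [hf h]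
      · have := hr v; have := hSr e'; omega
      · have := hr v'; have := hSr e; omega
      · have A := hSr e
        have A' := hSr e'
        have : e = e' := hS (by dsimp only; omega)
        rw [this]
    · rw [Fintype.card_sum]
      rintro (v | e) <;> simp only [Sum.elim_inl, Sum.elim_inr]
      · have := hr v; omega
      · have := hSr e; omega
  · intro e
    have := hSr e
    dsimp only
    omega

/-- Labels of the pendant vertices (zero-based). -/
def skipLab (m t j x : ℕ) : ℕ := j * m + x + if j * m + x < t then 0 else m

theorem skipLab_inj (m t j x j' x' : ℕ) (hx : x < m) (hx' : x' < m)
    (h : skipLab m t j x = skipLab m t j' x') : j = j' ∧ x = x' := by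
  have h1 : j * m + x = j' * m + x' := by
    unfold skipLab at h
    split_ifs at h <;> omega
  have hm : 0 < m := by omega
  have e1 : (j * m + x) / m = j := by
    rw [mul_comm, Nat.mul_add_div hm, Nat.div_eq_of_lt hx, add_zero]
  have e2 : (j' * m + x') / m = j' := by
    rw [mul_comm, Nat.mul_add_div hm, Nat.div_eq_of_lt hx', add_zero]
  have : j = j' := by rw [← e1, ← e2, h1]
  subst this
  exact ⟨rfl, by omega⟩

theorem skipLab_range (m n t j x : ℕ) (hx : x < m) (hj : j < n) :
    skipLab m t j x < m * n + m ∧ (skipLab m t j x < t ∨ t + m ≤ skipLab m t j x) := by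
  have h1 : j * m + m ≤ m * n := by
    calc j * m + m = m * (j + 1) := by ring
      _ ≤ m * n := Nat.mul_le_mul_left m hj
  unfold skipLab
  split_ifs <;> omega

/-- Labels of the cycle vertices (zero-based, before the shift by `t`). -/
def cycLab (m i : ℕ) : ℕ := if i % 2 = 0 then i / 2 else (i + m) / 2

theorem crown_aux (h n t : ℕ) (hn : 1 ≤ n) (ht : t ≤ (2 * h + 1) * n) :
    ∃ fv fe, IsSuperEdgeMagic (crownEnds (2 * h + 1) n) fv fe
      (t + h + 2 + 2 * ((2 * h + 1) * n + (2 * h + 1))) := by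
  obtain ⟨m, hm⟩ : ∃ m, m = 2 * h + 1 := ⟨_, rfl⟩
  rw [← hm] at ht ⊢
  obtain ⟨q, r, hq, hr, hqr⟩ : ∃ q r, q < n ∧ r ≤ m ∧ t = q * m + r := by
    have hmp : 0 < m := by omega
    by_cases hlt : t / m < n
    · exact ⟨t / m, t % m, hlt, (Nat.mod_lt _ hmp).le, by
        rw [mul_comm]; exact (Nat.div_add_mod t m).symm⟩
    · have h1 : m * n ≤ t := by
        rw [mul_comm]; exact (Nat.le_div_iff_mul_le hmp).1 (not_lt.1 hlt)
      obtain ⟨n', rfl⟩ : ∃ n', n = n' + 1 := ⟨n - 1, by omega⟩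
      exact ⟨n', m, by omega, le_rfl, by
        have : t = m * (n' + 1) := le_antisymm ht h1
        rw [this]; ring⟩
  obtain ⟨X, Y, h1, hX, hY⟩ := cut_nat h r (by omega)
  rw [← hm] at h1 hX hY
  have hcl : ∀ i, i < m → cycLab m i < m := by
    intro i hi; unfold cycLab; split_ifs <;> omega
  have hci : ∀ i i', i < m → i' < m → cycLab m i = cycLab m i' → i = i' := by
    intro i i' hi hi'; unfold cycLab; split_ifs <;> omega
  have hcs : ∀ i, i < m → cycLab m i + cycLab m ((i + 1) % m) = h + (i + 1) % m := by
    intro i hi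
    by_cases hl : i + 1 = m
    · rw [hl, Nat.mod_self]; unfold cycLab; split_ifs <;> omega
    · rw [Nat.mod_eq_of_lt (by omega)]; unfold cycLab; split_ifs <;> omega
  have hcsi : ∀ i i', i < m → i' < m → (i + 1) % m = (i' + 1) % m → i = i' := by
    intro i i' hi hi' he
    have e : ∀ i, i < m → (i + 1) % m = if i + 1 = m then 0 else i + 1 := by
      intro i hi
      split_ifs with hl
      · rw [hl, Nat.mod_self]
      · exact Nat.mod_eq_of_lt (by omega)
    rw [e i hi, e i' hi'] at he
    split_ifs at he <;> omega
  -- pendant sums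
  have hps : ∀ w j, w < m → skipLab m t j (X w) + w = skipLab m t j (Y w) + h := by
    intro w j hw
    obtain ⟨a1, a2, a3, a4⟩ := h1 w hw
    have hside : j * m + X w < t ↔ j * m + Y w < t := by
      rcases lt_trichotomy j q with hj | hj | hj
      · have : j * m + m ≤ q * m := by
          calc j * m + m = (j + 1) * m := by ring
            _ ≤ q * m := Nat.mul_le_mul_right m hj
        omega
      · subst hj; omega
      · have : q * m + m ≤ j * m := by
          calc q * m + m = (q + 1) * m := by ring
            _ ≤ j * m := Nat.mul_le_mul_right m hj
        omega
    unfold skipLab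
    by_cases hc : j * m + X w < t
    · rw [if_pos hc, if_pos (hside.1 hc)]; omega
    · rw [if_neg hc, if_neg (fun hh => hc (hside.2 hh))]; omega
  let fv : (Fin m ⊕ Fin m × Fin n) → ℕ := fun v => match v with
    | Sum.inl i => t + cycLab m i + 1
    | Sum.inr p => skipLab m t p.2 (X (cycLab m p.1)) + 1
  have hcard : Fintype.card (Fin m ⊕ Fin m × Fin n) = m * n + m := by
    simp [add_comm]
  have hsum : ∀ e, fv (crownEnds m n e).1 + fv (crownEnds m n e).2 = t + h + 2 +
      (match e with
        | Sum.inl i => t + (i.val + 1) % m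
        | Sum.inr p => skipLab m t p.2 (Y (cycLab m p.1))) := by
    rintro (i | p)
    · have := hcs i.val i.2
      simp only [crownEnds, fv]
      omega
    · have := hps (cycLab m p.1) p.2 (hcl _ p.1.2)
      simp only [crownEnds, fv]
      omega
  have := sem_of_sums (crownEnds m n) fv (t + h + 2) rfl ?_ ?_ ?_ ?_
  · rwa [hcard] at this
  · rintro (i | p) (i' | p') he <;> simp only [fv] at he
    · rw [Fin.ext (hci i i' i.2 i'.2 (by omega))]
    · have A := hcl i i.2
      have B := skipLab_range m n t p'.2 (X (cycLab m p'.1)) (h1 _ (hcl _ p'.1.2)).1 p'.2.2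
      omega
    · have A := hcl i' i'.2
      have B := skipLab_range m n t p.2 (X (cycLab m p.1)) (h1 _ (hcl _ p.1.2)).1 p.2.2
      omega
    · obtain ⟨A, B⟩ := skipLab_inj m t _ _ _ _ (h1 _ (hcl _ p.1.2)).1 (h1 _ (hcl _ p'.1.2)).1
        (Nat.succ_injective he)
      have C := hci _ _ p.1.2 p'.1.2 (hX _ _ (hcl _ p.1.2) (hcl _ p'.1.2) B)
      rw [Prod.ext (Fin.ext C) (Fin.ext A)]
  · rw [hcard]
    rintro (i | p) <;> simp only [fv]
    · have A := hcl i i.2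
      omega
    · have B := skipLab_range m n t p.2 (X (cycLab m p.1)) (h1 _ (hcl _ p.1.2)).1 p.2.2
      omega
  · intro e e' he
    dsimp only at he
    rw [hsum, hsum] at he
    have he := Nat.add_left_cancel he
    rcases e with i | p <;> rcases e' with i' | p' <;> simp only at he
    · rw [Fin.ext (hcsi i i' i.2 i'.2 (by omega))]
    · have A := Nat.mod_lt (i.val + 1) (show m > 0 by omega)
      have B := skipLab_range m n t p'.2 (Y (cycLab m p'.1)) (h1 _ (hcl _ p'.1.2)).2.1 p'.2.2
      omega
    · have A := Nat.mod_lt (i'.val + 1) (show m > 0 by omega)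
      have B := skipLab_range m n t p.2 (Y (cycLab m p.1)) (h1 _ (hcl _ p.1.2)).2.1 p.2.2
      omega
    · obtain ⟨A, B⟩ := skipLab_inj m t _ _ _ _ (h1 _ (hcl _ p.1.2)).2.1
        (h1 _ (hcl _ p'.1.2)).2.1 he
      have C := hci _ _ p.1.2 p'.1.2 (hY _ _ (hcl _ p.1.2) (hcl _ p'.1.2) B)
      rw [Prod.ext (Fin.ext C) (Fin.ext A)]
  · intro e
    rw [hsum, hcard]
    rcases e with i | p
    · have A := Nat.mod_lt (i.val + 1) (show m > 0 by omega)
      dsimp only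
      omega
    · have B := skipLab_range m n t p.2 (Y (cycLab m p.1)) (h1 _ (hcl _ p.1.2)).2.1 p.2.2
      dsimp only
      omega

/-- for m = p^k an odd prime power and n ≥ 1, the crown
C_m ⊙ K̄_n is perfect super edge-magic: every integer j with
2mn + (5m+3)/2 ≤ j ≤ 3mn + (5m+3)/2 is the valence of a super edge-magic
labeling of C_m ⊙ K̄_n. -/
theorem crown_primePower_perfectSuperEdgeMagic (p k n m : ℕ) (hp : p.Prime)
    (hp2 : 2 < p) (hk : 1 ≤ k) (hn : 1 ≤ n) (hm : m = p ^ k) :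
    ∀ j : ℕ, 2 * m * n + (5 * m + 3) / 2 ≤ j → j ≤ 3 * m * n + (5 * m + 3) / 2 →
      ∃ fv fe, IsSuperEdgeMagic (crownEnds m n) fv fe j := by
  intro j hj1 hj2
  have hodd : Odd m := by
    rw [hm]; exact (hp.odd_of_ne_two (by omega)).pow
  obtain ⟨h, hh⟩ := hodd
  have e5 : (5 * m + 3) / 2 = 5 * h + 4 := by omega
  rw [e5] at hj1 hj2
  have e2 : 2 * m * n = 2 * (m * n) := by ring
  have e3 : 3 * m * n = 3 * (m * n) := by ring
  rw [e2] at hj1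
  rw [e3] at hj2
  have key := crown_aux h n (j - (2 * (m * n) + (5 * h + 4))) hn (by rw [← hh]; omega)
  rw [← hh] at key
  have e : j - (2 * (m * n) + (5 * h + 4)) + h + 2 + 2 * (m * n + m) = j := by omega
  rwa [e] at key
end
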